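/- Let g ≥ 2 and n ≥ 3, and let a, b ∈ Γ_g be two elements with ab ≠ ba. Then there exists a group homomorphism ρ: Γ_g → SL_n(ℝ) such that the subgroup of SL_n(ℝ) generated by ρ(a) and ρ(b) is Zariski-dense in SL_n(ℝ). -/

import Mathlib

/-!
Surface groups of genus `g ≥ 2` are residually free, so a homomorphism to the free group `F₂` that
does not kill `⁅a, b⁆` reduces the problem to two non-commuting elements `u` and `v` of `F₂`. Any
two representations `F₂ → SL_n(ℝ)` lie in a common polynomial family in one real parameter, so
finitely many algebraic conditions hold simultaneously for some representation as soon as each of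
them can be achieved separately, and they can be combined with one open condition. In this way one
arranges that `u²` has distinct positive eigenvalues and that neither the eigenvalues of `u²` nor
those of `⁅u², vᵐ⁆`, where `m = (2ⁿ)!`, satisfy an unexpected multiplicative relation with small
exponents. A single such relation is avoided by induction on `n`, up to the case where it says that
some power of `z ∈ F₂` has the eigenvalue `1`. There one uses that the generic cyclic algebra is a
domain, so a nontrivial word cannot have the eigenvalue `1` on generic elements of it.

Diagonalize `u²`. The Lie algebra of the Zariski closure is then spanned by matrix units and
diagonal matrices. If it lacked some matrix unit, it would leave a proper coordinate subspace
invariant, and `v` would permute the finitely many invariant coordinate subspaces. Both `u²` and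
`vᵐ` would preserve one of them, and on it their commutator would have determinant `1`, which is a
forbidden relation between eigenvalues. Hence the Lie algebra is the whole of `sl_n(ℝ)`.
-/

open Matrix MvPolynomial
open scoped commutatorElement

/-- `SL n K`: the special linear group of `n × n` matrices over `K`. -/
abbrev SL (n : ℕ) (K : Type) [CommRing K] := Matrix.SpecialLinearGroup (Fin n) K

/-- The relator `[a₁,b₁][a₂,b₂]⋯[a_g,b_g]` of the genus-`g` surface group;
`(i, false)` is the generator `aᵢ` and `(i, true)` is `bᵢ`. -/
def surfaceRelator (g : ℕ) : FreeGroup (Fin g × Bool) :=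
  (List.ofFn fun i : Fin g =>
    ⁅FreeGroup.of (i, false), FreeGroup.of (i, true)⁆).prod

/-- The surface group `Γ_g` of genus `g`. -/
abbrev SurfaceGroup (g : ℕ) : Type :=
  PresentedGroup ({surfaceRelator g} : Set (FreeGroup (Fin g × Bool)))

/-- A subgroup `H ≤ SL_n(ℝ)` is Zariski-dense in `SL_n(ℝ)`: every real polynomial in the
matrix entries vanishing on `H` vanishes on all of `SL_n(ℝ)`. -/
def IsZariskiDense (n : ℕ) (H : Subgroup (SL n ℝ)) : Prop :=
  ∀ P : MvPolynomial (Fin n × Fin n) ℝ,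
    (∀ h ∈ H, eval (fun p => (h : Matrix (Fin n) (Fin n) ℝ) p.1 p.2) P = 0) →
    ∀ A : SL n ℝ, eval (fun p => (A : Matrix (Fin n) (Fin n) ℝ) p.1 p.2) P = 0

/-! ### The punctured torus group in `SL₂(ℤ)` -/

/-- The free group on `x = of false` and `y = of true`. -/
abbrev F₂ : Type := FreeGroup Bool

namespace F₂

/-- The commutator `[x, y]` of the two generators. Regarding `F₂` as the fundamental group of a
punctured torus, it is the loop around the puncture. -/
abbrev boundary : F₂ := ⁅FreeGroup.of false, FreeGroup.of true⁆

/-- The values of `torusRep` on the generators. -/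
def torusGenerator : Bool → SL 2 ℤ
  | false => ⟨!![2, 1; 1, 1], by simp [det_fin_two]⟩
  | true => ⟨!![3, 1; -1, 0], by simp [det_fin_two]⟩

/-- The holonomy of a punctured torus covering the modular curve. It sends `boundary` to a
parabolic element. -/
def torusRep : F₂ →* SL 2 ℤ := FreeGroup.lift torusGenerator

theorem torusRep_boundary : torusRep boundary = -ModularGroup.T ^ 6 := by
  rw [torusRep, map_commutatorElement, commutatorElement_def]
  simp only [FreeGroup.lift_apply_of]
  decide

theorem torusRep_boundary_zpow_two_mul (k : ℤ) :
    torusRep (boundary ^ (2 * k)) = ModularGroup.T ^ (12 * k) := by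
  rw [map_zpow, torusRep_boundary, _root_.zpow_mul, Even.neg_zpow even_two, ← zpow_natCast,
    ← _root_.zpow_mul, ← _root_.zpow_mul]
  congr 1
  push_cast
  ring

/-- The part of the projective line swept out from the line `u = 0` (included) to the line
`v = 0` (excluded) through the quadrant where `u` and `v` have the same sign. -/
def HalfOpenArc (u v : ℤ) : Prop := (0 ≤ u ∧ 0 < v) ∨ (u ≤ 0 ∧ v < 0)

/-- The ping-pong arcs towards which the generators push the first columns of matrices. Together
with the `repellingArc`s they partition the projective line. -/
def attractingArc (b : Bool) : Set (SL 2 ℤ) :=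
  {A | bif b then HalfOpenArc (-A 1 0) (A 0 0 + A 1 0) else HalfOpenArc (A 0 0) (A 1 0)}

/-- The ping-pong arcs towards which the inverses of the generators push the first columns of
matrices. -/
def repellingArc (b : Bool) : Set (SL 2 ℤ) :=
  {A | bif b then HalfOpenArc (2 * A 0 0 + A 1 0) (-A 0 0)
    else HalfOpenArc (A 0 0 + A 1 0) (-2 * A 0 0 - A 1 0)}

theorem torusGenerator_mul_col (A : SL 2 ℤ) : ∀ b : Bool,
    (torusGenerator b * A) 0 0 = (bif b then 3 else 2) * A 0 0 + A 1 0 ∧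
      (torusGenerator b * A) 1 0 = bif b then -A 0 0 else A 0 0 + A 1 0
  | false | true => by
    simp only [Matrix.SpecialLinearGroup.coe_mul, Matrix.mul_apply, Fin.sum_univ_two]
    simp [torusGenerator]

theorem torusGenerator_inv_mul_col (A : SL 2 ℤ) : ∀ b : Bool,
    ((torusGenerator b)⁻¹ * A) 0 0 = (bif b then -A 1 0 else A 0 0 - A 1 0) ∧
      ((torusGenerator b)⁻¹ * A) 1 0 = (bif b then A 0 0 + 3 * A 1 0 else -A 0 0 + 2 * A 1 0)
  | false | true => by
    simp only [Matrix.SpecialLinearGroup.coe_mul, Matrix.mul_apply, Fin.sum_univ_two,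
      Matrix.SpecialLinearGroup.coe_inv, adjugate_fin_two]
    simp [torusGenerator, sub_eq_add_neg]

theorem torusRep_injective : Function.Injective torusRep := by
  have col_ne_zero (A : SL 2 ℤ) : A 0 0 ≠ 0 ∨ A 1 0 ≠ 0 := by
    by_contra! h
    have hdet := A.det_coe
    rw [det_fin_two, h.1, h.2] at hdet
    simp at hdet
  refine FreeGroup.injective_lift_of_ping_pong _ attractingArc repellingArc ?_ ?_ ?_ ?_ ?_ ?_
  · rintro (_ | _)
    · exact ⟨ModularGroup.S, Or.inl (by decide)⟩
    · exact ⟨1, Or.inl (by decide)⟩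
  · rintro (_ | _) (_ | _) h <;> simp only [ne_eq, not_true_eq_false] at h <;>
      refine Set.disjoint_left.2 fun A h₁ h₂ => ?_ <;>
      simp only [attractingArc, HalfOpenArc, cond_true, cond_false, Set.mem_ofPred_eq] at h₁ h₂ <;>
      omega
  · rintro (_ | _) (_ | _) h <;> simp only [ne_eq, not_true_eq_false] at h <;>
      refine Set.disjoint_left.2 fun A h₁ h₂ => ?_ <;>
      simp only [repellingArc, HalfOpenArc, cond_true, cond_false, Set.mem_ofPred_eq] at h₁ h₂ <;>
      omega
  · rintro (_ | _) (_ | _) <;> refine Set.disjoint_left.2 fun A h₁ h₂ => ?_ <;>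
      simp only [attractingArc, repellingArc, HalfOpenArc, cond_true, cond_false,
        Set.mem_ofPred_eq] at h₁ h₂ <;>
      omega
  · rintro (_ | _) <;> rintro _ ⟨A, hA, rfl⟩ <;> have := col_ne_zero A <;>
      simp only [attractingArc, repellingArc, HalfOpenArc, Set.mem_compl_iff, Set.mem_ofPred_eq,
        smul_eq_mul, torusGenerator_mul_col, cond_true, cond_false] at hA ⊢ <;>
      omega
  · rintro (_ | _) <;> rintro _ ⟨A, hA, rfl⟩ <;> have := col_ne_zero A <;>
      simp only [attractingArc, repellingArc, HalfOpenArc, Set.mem_compl_iff, Set.mem_ofPred_eq,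
        smul_eq_mul, Pi.inv_apply, torusGenerator_inv_mul_col, cond_true, cond_false] at hA ⊢ <;>
      omega

end F₂

/-! ### Parabolic elements of the punctured torus group -/

/-- The integral Heisenberg group: `⟨a, b, z⟩` stands for the unitriangular matrix with
superdiagonal entries `a`, `b` and corner entry `z`. -/
@[ext] structure Heisenberg where
  a : ℤ
  b : ℤ
  z : ℤ

namespace Heisenberg

instance : Mul Heisenberg := ⟨fun p q => ⟨p.a + q.a, p.b + q.b, p.z + q.z + p.a * q.b⟩⟩
instance : One Heisenberg := ⟨⟨0, 0, 0⟩⟩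
instance : Inv Heisenberg := ⟨fun p => ⟨-p.a, -p.b, -p.z + p.a * p.b⟩⟩

theorem mul_def (p q : Heisenberg) :
    p * q = ⟨p.a + q.a, p.b + q.b, p.z + q.z + p.a * q.b⟩ := rfl

theorem one_def : (1 : Heisenberg) = ⟨0, 0, 0⟩ := rfl

theorem inv_def (p : Heisenberg) : p⁻¹ = ⟨-p.a, -p.b, -p.z + p.a * p.b⟩ := rfl

instance : Group Heisenberg := Group.ofLeftAxioms
  (fun p q r => by simp only [mul_def, mk.injEq]; constructorm* _ ∧ _ <;> ring)
  (fun p => by simp [mul_def, one_def])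
  (fun p => by simp [mul_def, one_def, inv_def])

theorem pow_eq (p : Heisenberg) (n : ℕ) :
    p ^ n = ⟨n * p.a, n * p.b, n * p.z + n.choose 2 * (p.a * p.b)⟩ := by
  induction n with
  | zero => simp [one_def]
  | succ n ih =>
    rw [pow_succ, ih, mul_def, Nat.choose_succ_succ' n 1, Nat.choose_one_right]
    ext <;> push_cast <;> ring

/-- The embedding of the center. -/
def center : Multiplicative ℤ →* Heisenberg where
  toFun k := ⟨0, 0, k.toAdd⟩
  map_one' := rfl
  map_mul' _ _ := by simp [mul_def]

theorem central_zpow (k : ℤ) : (⟨0, 0, 1⟩ : Heisenberg) ^ k = ⟨0, 0, k⟩ := by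
  simpa [center, ← ofAdd_zsmul] using (map_zpow center (Multiplicative.ofAdd 1) k).symm

end Heisenberg

namespace F₂

/-- The quotient of `F₂` by the second term of its lower central series. -/
def toHeisenberg : F₂ →* Heisenberg :=
  FreeGroup.lift fun b => bif b then ⟨0, 1, 0⟩ else ⟨1, 0, 0⟩

theorem toHeisenberg_boundary : toHeisenberg boundary = ⟨0, 0, 1⟩ := by
  simp [toHeisenberg, commutatorElement_def, Heisenberg.mul_def,
    Heisenberg.inv_def]

/-- The exponent is read off in the Heisenberg group, and twelfth roots in `F₂` are unique. -/
theorem mem_zpowers_boundary_of_pow_twelve_eq {g : F₂} {k : ℤ} (h : g ^ 12 = boundary ^ (2 * k)) :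
    g ∈ Subgroup.zpowers boundary := by
  have h_heis := congrArg toHeisenberg h
  rw [map_pow, map_zpow, toHeisenberg_boundary, Heisenberg.central_zpow, Heisenberg.pow_eq,
    Heisenberg.mk.injEq] at h_heis
  obtain ⟨ha, -, hz⟩ := h_heis
  have ha : (toHeisenberg g).a = 0 := by simpa using ha
  refine ⟨(toHeisenberg g).z, pow_left_injective (M := F₂) (n := 12) (by norm_num) ?_⟩
  change (boundary ^ _) ^ 12 = g ^ 12
  rw [h, ← zpow_natCast, ← _root_.zpow_mul, mul_comm, ← hz, ha]
  simp

theorem exists_sq_eq_T_zpow_of_apply_one_zero {A : SL 2 ℤ} (h : A 1 0 = 0) :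
    ∃ k : ℤ, A ^ 2 = ModularGroup.T ^ (2 * k) := by
  have hdet := A.det_coe
  rw [det_fin_two, h, mul_zero, sub_zero] at hdet
  refine ⟨A 0 0 * A 0 1, ?_⟩
  apply Subtype.ext
  rw [Matrix.SpecialLinearGroup.coe_pow, ModularGroup.coe_T_zpow, pow_two]
  ext i j
  rcases Int.eq_one_or_neg_one_of_mul_eq_one' hdet with h₁ | h₁ <;>
    fin_cases i <;> fin_cases j <;>
    simp [Matrix.mul_apply, Fin.sum_univ_two, h, h₁.1, h₁.2] <;> ring

theorem mem_zpowers_boundary_of_torusRep_apply_one_zero {g : F₂} (h : torusRep g 1 0 = 0) :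
    g ∈ Subgroup.zpowers boundary := by
  obtain ⟨k, hk⟩ := exists_sq_eq_T_zpow_of_apply_one_zero h
  refine mem_zpowers_boundary_of_pow_twelve_eq (k := k) (torusRep_injective ?_)
  rw [torusRep_boundary_zpow_two_mul, map_pow, show 12 = 2 * 6 by norm_num, pow_mul, hk,
    ← zpow_natCast, ← _root_.zpow_mul]
  congr 1
  push_cast
  ring

end F₂

/-! ### Products of conjugates by high powers of a parabolic element -/

/-- The first column of `A` has small slope, with respect to a bound `K ≥ 1`. -/
def IsFlat (K : ℤ) (A : SL 2 ℤ) : Prop := A 0 0 ≠ 0 ∧ 2 * K * |A 1 0| ≤ |A 0 0|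

/-- The slope of the first column of `A` is not too small, with respect to a bound `K ≥ 1`. -/
def IsSteep (K : ℤ) (A : SL 2 ℤ) : Prop := A 1 0 ≠ 0 ∧ |A 0 0| ≤ 3 * K * |A 1 0|

theorem isFlat_T_zpow (K m : ℤ) : IsFlat K (ModularGroup.T ^ m) := by
  simp [IsFlat, ModularGroup.coe_T_zpow]

theorem IsFlat.isSteep_mul {K : ℤ} {M A : SL 2 ℤ} (hA : IsFlat K A) (hM : ∀ i j, |M i j| ≤ K)
    (hM₁₀ : M 1 0 ≠ 0) : IsSteep K (M * A) := by
  obtain ⟨hA₀, hA⟩ := hA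
  have hK : 1 ≤ |M 1 0| := Int.one_le_abs hM₁₀
  have hx : 1 ≤ |A 0 0| := Int.one_le_abs hA₀
  simp only [IsSteep, Matrix.SpecialLinearGroup.coe_mul, Matrix.mul_apply, Fin.sum_univ_two]
  have lower : |A 0 0| - K * |A 1 0| ≤ |M 1 0 * A 0 0 + M 1 1 * A 1 0| := by
    have := abs_sub_abs_le_abs_add (M 1 0 * A 0 0) (M 1 1 * A 1 0)
    rw [abs_mul, abs_mul] at this
    nlinarith [hM 1 1, abs_nonneg (A 1 0)]
  have upper : |M 0 0 * A 0 0 + M 0 1 * A 1 0| ≤ K * |A 0 0| + K * |A 1 0| := by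
    refine (abs_add_le _ _).trans ?_
    rw [abs_mul, abs_mul]
    gcongr <;> exact hM _ _
  refine ⟨fun h => ?_, ?_⟩
  · rw [h, abs_zero] at lower
    linarith
  · nlinarith [hM 1 0]

theorem IsSteep.isFlat_T_zpow_mul {K m : ℤ} {A : SL 2 ℤ} (hA : IsSteep K A) (hK : 1 ≤ K)
    (hm : 5 * K ≤ |m|) : IsFlat K (ModularGroup.T ^ m * A) := by
  obtain ⟨hA₀, hA⟩ := hA
  have hy : 1 ≤ |A 1 0| := Int.one_le_abs hA₀
  have lower : 2 * K * |A 1 0| ≤ |A 0 0 + m * A 1 0| := by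
    have := abs_sub_abs_le_abs_add (m * A 1 0) (A 0 0)
    rw [abs_mul, add_comm] at this
    nlinarith
  simp only [IsFlat, Matrix.SpecialLinearGroup.coe_mul, ModularGroup.coe_T_zpow, Matrix.mul_apply,
    Fin.sum_univ_two]
  simp only [of_apply, cons_val_zero, cons_val_one, cons_val', cons_val_fin_one, one_mul, zero_mul,
    zero_add]
  exact ⟨abs_pos.1 (by nlinarith), lower⟩

theorem isSteep_T_zpow_neg_mul_prod {K : ℤ} (hK : 1 ≤ K) (L : List (ℤ × SL 2 ℤ)) :
    ∀ p : ℤ × SL 2 ℤ, (p :: L).IsChain (fun p q => 5 * K ≤ |q.1 - p.1|) →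
      (∀ q ∈ p :: L, q.2 1 0 ≠ 0 ∧ ∀ i j, |q.2 i j| ≤ K) →
      IsSteep K (ModularGroup.T ^ (-p.1) * ((p :: L).map fun q =>
        ModularGroup.T ^ q.1 * q.2 * (ModularGroup.T ^ q.1)⁻¹).prod) := by
  induction L with
  | nil =>
    intro p _ hp
    obtain ⟨hp₁₀, hpK⟩ := hp p (by simp)
    simpa [mul_assoc] using (isFlat_T_zpow K (-p.1)).isSteep_mul hpK hp₁₀
  | cons q L ih =>
    intro p hchain hp
    obtain ⟨hp₁₀, hpK⟩ := hp p (by simp)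
    rw [List.isChain_cons_cons] at hchain
    have hq := ih q hchain.2 fun r hr => hp r (List.mem_cons_of_mem _ hr)
    convert (hq.isFlat_T_zpow_mul hK hchain.1).isSteep_mul hpK hp₁₀ using 1
    rw [List.map_cons, List.prod_cons]
    group

theorem prod_conj_T_zpow_ne_one {K : ℤ} (hK : 1 ≤ K) {L : List (ℤ × SL 2 ℤ)} (hL : L ≠ [])
    (hchain : L.IsChain fun p q => 5 * K ≤ |q.1 - p.1|)
    (hentries : ∀ q ∈ L, q.2 1 0 ≠ 0 ∧ ∀ i j, |q.2 i j| ≤ K) :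
    (L.map fun q => ModularGroup.T ^ q.1 * q.2 * (ModularGroup.T ^ q.1)⁻¹).prod ≠ 1 := by
  obtain ⟨p, L, rfl⟩ := List.exists_cons_of_ne_nil hL
  intro h
  have hsteep := isSteep_T_zpow_neg_mul_prod hK L p hchain hentries
  rw [h, mul_one] at hsteep
  exact hsteep.1 (by simp [ModularGroup.coe_T_zpow])

namespace F₂

theorem exists_prod_conj_boundary_ne_one {L : List (ℤ × F₂)} (hL : L ≠ [])
    (hchain : L.IsChain fun p q => p.1 ≠ q.1) (hmem : ∀ q ∈ L, q.2 ∉ Subgroup.zpowers boundary) :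
    ∃ N : ℤ, (L.map fun q => boundary ^ (N * q.1) * q.2 * (boundary ^ (N * q.1))⁻¹).prod ≠ 1 := by
  obtain ⟨C, hC⟩ := (L.finite_toSet.image fun q => ∑ i, ∑ j, |torusRep q.2 i j|).bddAbove
  have hK : 1 ≤ max 1 C := le_max_left 1 C
  refine ⟨2 * max 1 C, fun h => prod_conj_T_zpow_ne_one hK
    (L := L.map fun q => (12 * (max 1 C * q.1), torusRep q.2)) (by simpa using hL) ?_ ?_ ?_⟩
  · refine List.isChain_map_of_isChain _ (fun p q hpq => ?_) hchain
    have : 1 ≤ |q.1 - p.1| := Int.one_le_abs (sub_ne_zero.2 hpq.symm)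
    rw [← mul_sub, ← mul_sub, abs_mul, abs_mul, abs_of_pos (zero_lt_one.trans_le hK)]
    norm_num
    nlinarith
  · simp only [List.mem_map, forall_exists_index, and_imp, forall_apply_eq_imp_iff₂]
    refine fun q hq => ⟨fun h₀ => hmem q hq (mem_zpowers_boundary_of_torusRep_apply_one_zero h₀),
      fun i j => le_max_of_le_right ((?_ : _ ≤ _).trans (hC ⟨q, hq, rfl⟩))⟩
    exact (Finset.single_le_sum (f := fun j => |torusRep q.2 i j|) (fun j _ => abs_nonneg _)
      (Finset.mem_univ j)).trans (Finset.single_le_sum (f := fun i => ∑ j, |torusRep q.2 i j|)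
        (fun i _ => Finset.sum_nonneg fun j _ => abs_nonneg _) (Finset.mem_univ i))
  · have := congrArg torusRep h
    rw [map_list_prod, map_one, List.map_map] at this
    rw [← this, List.map_map]
    refine congrArg List.prod (List.map_congr_left fun q _ => ?_)
    simp only [Function.comp_apply, map_mul, map_inv, mul_assoc, torusRep_boundary_zpow_two_mul]

end F₂

/-! ### Amalgams of free groups along the boundary -/

section Amalgam

variable {ι G : Type*} [Group G] (i : ι → F₂ →* G)

/-- The product in `G` of a word whose syllables are elements of copies of `F₂` indexed
by `ι`. -/
def evalSyllables (L : List (ι × F₂)) : G := (L.map fun p => i p.1 p.2).prod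

variable {i}

theorem exists_syllable_eq_mul (hb : ∀ s s', i s F₂.boundary = i s' F₂.boundary) (p q : ι × F₂)
    (h : p.1 = q.1 ∨ p.2 ∈ Subgroup.zpowers F₂.boundary ∨ q.2 ∈ Subgroup.zpowers F₂.boundary) :
    ∃ r : ι × F₂, i r.1 r.2 = i p.1 p.2 * i q.1 q.2 := by
  obtain ⟨s, x⟩ := p
  obtain ⟨s', y⟩ := q
  rcases h with rfl | ⟨k, rfl⟩ | ⟨k, rfl⟩
  · exact ⟨(s, x * y), map_mul _ _ _⟩
  · exact ⟨(s', F₂.boundary ^ k * y), by simp only [map_mul, map_zpow, hb s s']⟩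
  · exact ⟨(s, x * F₂.boundary ^ k), by simp only [map_mul, map_zpow, hb s s']⟩

theorem exists_evalSyllables_eq (hgen : ⨆ s, (i s).range = ⊤) (w : G) :
    ∃ L, evalSyllables i L = w := by
  refine Subgroup.iSup_induction _ (C := fun w => ∃ L, evalSyllables i L = w)
    (hgen ▸ Subgroup.mem_top w) ?_ ⟨[], rfl⟩ ?_
  · rintro s _ ⟨g, rfl⟩
    exact ⟨[(s, g)], by simp [evalSyllables]⟩
  · rintro _ _ ⟨L, rfl⟩ ⟨L', rfl⟩
    exact ⟨L ++ L', by simp [evalSyllables]⟩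

theorem exists_reduced_evalSyllables_eq (hb : ∀ s s', i s F₂.boundary = i s' F₂.boundary)
    (hgen : ⨆ s, (i s).range = ⊤) (w : G) :
    ∃ L, evalSyllables i L = w ∧ L.IsChain fun p q => p.1 ≠ q.1 ∧
      p.2 ∉ Subgroup.zpowers F₂.boundary ∧ q.2 ∉ Subgroup.zpowers F₂.boundary := by
  obtain ⟨L, rfl, hmin⟩ := exists_minimalFor_of_wellFoundedLT
    (fun L => evalSyllables i L = w) List.length (exists_evalSyllables_eq hgen w)
  refine ⟨L, rfl, List.isChain_iff_forall_rel_of_append_cons_cons.2 fun {p q L₁ L₂} hL => ?_⟩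
  by_contra hpq
  obtain ⟨r, hr⟩ := exists_syllable_eq_mul hb p q (by tauto)
  have hlt := hmin (j := L₁ ++ r :: L₂) (by simp [evalSyllables, hL, hr, mul_assoc])
  simp [hL] at hlt

/-- The homomorphisms `φ N` twist the copies of `F₂` against each other along their common
boundary, like the powers of a Dehn twist. -/
theorem exists_twist_ne_one (hb : ∀ s s', i s F₂.boundary = i s' F₂.boundary)
    (hgen : ⨆ s, (i s).range = ⊤) {t : ι → ℤ} (ht : Function.Injective t) {φ : ℤ → G →* F₂}
    (hφ : ∀ N s g, φ N (i s g) = F₂.boundary ^ (N * t s) * g * (F₂.boundary ^ (N * t s))⁻¹)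
    {w : G} (hw : w ≠ 1) : ∃ N, φ N w ≠ 1 := by
  obtain ⟨L, rfl, hL⟩ := exists_reduced_evalSyllables_eq hb hgen w
  match L, hL with
  | [], _ => exact absurd rfl hw
  | [p], _ =>
    refine ⟨0, fun h => hw ?_⟩
    have hp : p.2 = 1 := by simpa [evalSyllables, hφ] using h
    simp [evalSyllables, hp]
  | p :: q :: L, hL =>
    have hp := (List.isChain_cons_cons.1 hL).1.2.1
    have hmem := hL.induction (fun p => p.2 ∉ Subgroup.zpowers F₂.boundary) _
      (fun _ _ h _ => h.2.2) fun _ => hp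
    obtain ⟨N, hN⟩ := F₂.exists_prod_conj_boundary_ne_one
      (L := (p :: q :: L).map fun p => (t p.1, p.2)) (by simp)
      (List.isChain_map_of_isChain (fun p => (t p.1, p.2)) (fun p q h => ht.ne h.1) hL)
      (List.forall_mem_map.2 hmem)
    refine ⟨N, ?_⟩
    rw [evalSyllables, map_list_prod, List.map_map]
    simpa only [List.map_map, Function.comp_def, hφ] using hN

end Amalgam

/-! ### Surface groups are residually free -/

namespace SurfaceGroup

variable {g : ℕ} {G : Type*} [Group G]

/-- The generators of `Γ_g`, indexed as in `surfaceRelator`. -/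
abbrev of (p : Fin g × Bool) : SurfaceGroup g := PresentedGroup.of p

theorem prod_commutator_of :
    (List.ofFn fun i : Fin g => (⁅of (i, false), of (i, true)⁆ : SurfaceGroup g)).prod = 1 := by
  refine Eq.trans ?_ (PresentedGroup.one_of_mem (Set.mem_singleton (surfaceRelator g)))
  conv_rhs => arg 2; unfold surfaceRelator
  rw [map_list_prod, List.map_ofFn]
  simp only [Function.comp_def, map_commutatorElement, of, PresentedGroup.of]

/-- The universal property of `Γ_g`. -/
def lift (f : Fin g × Bool → G)
    (hf : (List.ofFn fun i : Fin g => ⁅f (i, false), f (i, true)⁆).prod = 1) :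
    SurfaceGroup g →* G :=
  PresentedGroup.toGroup (f := f) fun r hr => by
    rw [Set.mem_singleton_iff.1 hr, surfaceRelator, map_list_prod, List.map_ofFn]
    simpa only [Function.comp_def, map_commutatorElement, FreeGroup.lift_apply_of] using hf

@[simp] theorem lift_of (f : Fin g × Bool → G) (hf) (p : Fin g × Bool) : lift f hf (of p) = f p :=
  PresentedGroup.toGroup.of _

theorem commutator_of_one_eq :
    ⁅of (g := 2) (1, true), of (g := 2) (1, false)⁆ =
      ⁅of (g := 2) (0, false), of (g := 2) (0, true)⁆ := by
  have h := prod_commutator_of (g := 2)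
  rw [List.ofFn_succ, List.ofFn_succ, List.ofFn_zero, List.prod_cons, List.prod_singleton] at h
  rw [← commutatorElement_inv (of (1, false)) (of (1, true))]
  exact (eq_inv_of_mul_eq_one_left h).symm

/-- The two copies of `F₂` whose amalgam along the boundary is `Γ₂`: the fundamental groups of the
halves of the surface. The generators are swapped in the second one, so that both boundaries
have the same orientation. -/
def half : Bool → F₂ →* SurfaceGroup 2
  | false => FreeGroup.lift fun b => of (0, b)
  | true => FreeGroup.lift fun b => of (1, !b)

theorem half_boundary : ∀ s, half s F₂.boundary = half false F₂.boundary
  | false => rfl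
  | true => by
    simp only [half, F₂.boundary, map_commutatorElement, FreeGroup.lift_apply_of]
    exact commutator_of_one_eq

theorem iSup_range_half : ⨆ s, (half s).range = ⊤ := by
  refine eq_top_iff.2 fun w _ => PresentedGroup.generated_by _ _ ?_ w
  rintro ⟨i, b⟩
  fin_cases i
  · exact Subgroup.mem_iSup_of_mem false ⟨.of b, FreeGroup.lift_apply_of⟩
  · exact Subgroup.mem_iSup_of_mem true ⟨.of !b, by simp [half, of]⟩

/-- The map `Γ₂ → F₂` folding the second half of the surface onto the first one, precomposed
with the `N`-th power of the Dehn twist along their common boundary. -/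
def fold (N : ℤ) : SurfaceGroup 2 →* F₂ :=
  lift (fun p => if p.1 = 0 then .of p.2 else F₂.boundary ^ N * .of (!p.2) * (F₂.boundary ^ N)⁻¹)
    (by
      simp only [List.ofFn_succ, List.ofFn_zero, List.prod_cons, List.prod_nil, if_true,
        Fin.succ_ne_zero, if_false, ← conjugate_commutatorElement, Bool.not_false, Bool.not_true]
      rw [← commutatorElement_inv (FreeGroup.of false) (FreeGroup.of true)]
      change F₂.boundary * (F₂.boundary ^ N * F₂.boundary⁻¹ * (F₂.boundary ^ N)⁻¹ * 1) = 1
      generalize F₂.boundary = c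
      group)

theorem fold_half (N : ℤ) (s : Bool) (w : F₂) : fold N (half s w) =
    F₂.boundary ^ (N * (bif s then 1 else 0)) * w *
      (F₂.boundary ^ (N * (bif s then 1 else 0)))⁻¹ := by
  have h : (fold N).comp (half s) =
      (MulAut.conj (F₂.boundary ^ (N * (bif s then 1 else 0)))).toMonoidHom := by
    ext b
    cases s <;> simp [fold, half, -map_zpow]
  exact DFunLike.congr_fun h w

theorem exists_hom_ne_one_two {w : SurfaceGroup 2} (hw : w ≠ 1) :
    ∃ φ : SurfaceGroup 2 →* F₂, φ w ≠ 1 := by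
  have ht : Function.Injective fun s : Bool => (bif s then 1 else 0 : ℤ) := by decide
  obtain ⟨N, hN⟩ := exists_twist_ne_one
    (fun s s' => (half_boundary s).trans (half_boundary s').symm) iSup_range_half ht fold_half hw
  exact ⟨fold N, hN⟩

/-! #### Cyclic covers of the surface of genus two -/

theorem prod_conj_pow_commutatorElement (a b : G) (n : ℕ) :
    (List.ofFn fun j : Fin n => a ^ (j : ℕ) * ⁅b, a⁆ * (a ^ (j : ℕ))⁻¹).prod = ⁅b, a ^ n⁆ := by
  induction n with
  | zero => simp
  | succ n ih =>
    rw [List.ofFn_succ_last, List.prod_append, List.prod_singleton]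
    simp only [Fin.val_castSucc, Fin.val_last, ih]
    simp only [commutatorElement_def]
    group

variable {k : ℕ}

/-- The inclusion of the fundamental group of the cyclic cover of degree `k + 1` of the surface
of genus two, to which the loop `a₁` does not lift. -/
def cover (k : ℕ) : SurfaceGroup (k + 2) →* SurfaceGroup 2 :=
  lift
    (fun p => Fin.cases (bif p.2 then of (0, true) else of (0, false) ^ (k + 1))
      (fun j => of (0, false) ^ (j : ℕ) * of (1, p.2) * (of (0, false) ^ (j : ℕ))⁻¹) p.1)
    (by
      have h : ⁅of (g := 2) (1, false), of (g := 2) (1, true)⁆ =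
          ⁅of (g := 2) (0, true), of (g := 2) (0, false)⁆ := by
        rw [← commutatorElement_inv, commutator_of_one_eq, commutatorElement_inv]
      rw [List.ofFn_succ, List.prod_cons]
      simp only [Fin.cases_zero, Fin.cases_succ, cond_true, cond_false,
        ← conjugate_commutatorElement, h, prod_conj_pow_commutatorElement]
      rw [← commutatorElement_inv, inv_mul_cancel])

/-- Left multiplication by `u i` on the `i`-th copy of `G`. -/
def diagonalPerm (ι G : Type*) [Group G] : (ι → G) →* Equiv.Perm (ι × G) where
  toFun u := Equiv.prodShear (Equiv.refl ι) fun i => Equiv.mulLeft (u i)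
  map_one' := by ext <;> simp [Equiv.prodShear]
  map_mul' u v := by ext <;> simp [Equiv.prodShear]

theorem diagonalPerm_apply {ι : Type*} (u : ι → G) (i : ι) (h : G) :
    diagonalPerm ι G u (i, h) = (i, u i * h) := rfl

/-- The rotation of `k + 1` copies of `G` whose `(k + 1)`-st power is left multiplication by
conjugates of `a⁻¹`. -/
def twistedRotation (k : ℕ) (a : G) : Equiv.Perm (Fin (k + 1) × G) :=
  Equiv.prodShear (finRotate (k + 1)) fun i => Equiv.mulLeft (if i = Fin.last k then a⁻¹ else 1)

theorem twistedRotation_castSucc (a h : G) (i : Fin k) :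
    twistedRotation k a (i.castSucc, h) = (i.succ, h) := by
  simp [twistedRotation, Equiv.prodShear, (Fin.castSucc_lt_last i).ne]

theorem twistedRotation_last (a h : G) :
    twistedRotation k a (Fin.last k, h) = (0, a⁻¹ * h) := by
  simp [twistedRotation, Equiv.prodShear]

theorem twistedRotation_pow_zero (a h : G) (j : Fin (k + 1)) :
    (twistedRotation k a ^ (j : ℕ)) (0, h) = (j, h) := by
  induction j using Fin.induction with
  | zero => rfl
  | succ j ih =>
    rw [Fin.val_succ, pow_succ', Equiv.Perm.mul_apply, ← Fin.val_castSucc, ih,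
      twistedRotation_castSucc]

theorem twistedRotation_pow_succ_zero (a h : G) :
    (twistedRotation k a ^ (k + 1)) (0, h) = (0, a⁻¹ * h) := by
  rw [pow_succ', Equiv.Perm.mul_apply, ← twistedRotation_last, ← twistedRotation_pow_zero a h
    (Fin.last k), Fin.val_last]

/-- The commutator is diagonal, since a conjugate of `diagonalPerm β` by the rotation is. -/
theorem commutator_twistedRotation_diagonalPerm {a : G} {β : Fin (k + 1) → G}
    {K : Fin (k + 1) → G} (hβ : ∀ i : Fin k, K i.castSucc * β i.succ = β i.castSucc)
    (hlast : K (Fin.last k) * (a * β 0 * a⁻¹) = β (Fin.last k)) :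
    ⁅(twistedRotation k a)⁻¹, diagonalPerm _ G β⁆ * diagonalPerm _ G K = 1 := by
  suffices h : diagonalPerm _ G β * twistedRotation k a =
      twistedRotation k a * diagonalPerm _ G (K⁻¹ * β) by
    rw [commutatorElement_def, inv_inv, mul_assoc _ _ (twistedRotation k a), h, map_mul, map_inv]
    group
  ext1 ⟨i, h⟩
  simp only [Equiv.Perm.mul_apply, diagonalPerm_apply]
  induction i using Fin.lastCases with
  | last => simp [twistedRotation_last, diagonalPerm_apply, ← hlast, mul_assoc]
  | cast i => simp [twistedRotation_castSucc, diagonalPerm_apply, ← hβ]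

theorem exists_monodromy (k : ℕ) :
    ∃ (Θ : SurfaceGroup 2 →* Equiv.Perm (Fin (k + 1) × SurfaceGroup (k + 2)))
      (β : Fin (k + 1) → SurfaceGroup (k + 2)), β 0 = of (0, true) ∧
      Θ (of (0, false)) = (twistedRotation k (of (0, false)))⁻¹ ∧
      Θ (of (0, true)) = diagonalPerm _ _ β ∧
      ∀ b, Θ (of (1, b)) = diagonalPerm _ _ fun j => of (j.succ, b) := by
  let K (j : Fin (k + 1)) : SurfaceGroup (k + 2) := ⁅of (j.succ, false), of (j.succ, true)⁆
  let β (j : Fin (k + 2)) : SurfaceGroup (k + 2) := (Fin.partialProd K j)⁻¹ * of (0, true)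
  have hβ (j : Fin (k + 1)) : K j * β j.succ = β j.castSucc := by
    simp [β, Fin.partialProd_succ, mul_assoc]
  have hβ_last : β (Fin.last (k + 1)) = of (0, false) * β 0 * (of (0, false))⁻¹ := by
    have hK : ⁅(of (0, false) : SurfaceGroup (k + 2)), of (0, true)⁆ *
        Fin.partialProd K (Fin.last (k + 1)) = 1 := by
      rw [Fin.partialProd, List.take_of_length_le (by simp), ← List.prod_cons]
      exact (congrArg List.prod List.ofFn_succ.symm).trans (prod_commutator_of (g := k + 2))
    simp only [β, Fin.partialProd_zero, inv_one, one_mul]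
    rw [inv_eq_of_mul_eq_one_left hK, commutatorElement_def]
    group
  have hrel := commutator_twistedRotation_diagonalPerm (a := of (0, false))
    (β := fun j => β j.castSucc) (K := K) (fun j => hβ j.castSucc)
    (by rw [Fin.castSucc_zero, ← hβ_last]; exact hβ (Fin.last k))
  let f (p : Fin 2 × Bool) : Equiv.Perm (Fin (k + 1) × SurfaceGroup (k + 2)) :=
    ![bif p.2 then diagonalPerm _ _ fun j => β j.castSucc else
      (twistedRotation k (of (0, false)))⁻¹, diagonalPerm _ _ fun j => of (j.succ, p.2)] p.1
  have hf : (List.ofFn fun i : Fin 2 => ⁅f (i, false), f (i, true)⁆).prod = 1 := by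
    simp only [List.ofFn_succ, List.ofFn_zero, List.prod_cons, List.prod_nil, mul_one]
    rwa [show ⁅f (Fin.succ 0, false), f (Fin.succ 0, true)⁆ = diagonalPerm _ _ K from
      (map_commutatorElement (diagonalPerm (Fin (k + 1)) (SurfaceGroup (k + 2))) _ _).symm]
  exact ⟨lift f hf, fun j => β j.castSucc, by simp [β], lift_of f hf _, lift_of f hf _,
    fun b => lift_of f hf _⟩

theorem cover_injective (k : ℕ) : Function.Injective (cover k) := by
  obtain ⟨Θ, β, hβ, hΘa, hΘb, hΘ⟩ := exists_monodromy k
  have key (w : SurfaceGroup (k + 2)) : ∀ h, Θ (cover k w) (0, h) = (0, w * h) := by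
    have hw : w ∈ Subgroup.closure (Set.range of) := by
      rw [PresentedGroup.closure_range_of]; trivial
    induction hw using Subgroup.closure_induction with
    | one => simp
    | mul x y _ _ hx hy => simp [hx, hy, mul_assoc]
    | inv x _ hx => intro h; rw [map_inv, map_inv, Equiv.Perm.inv_eq_iff_eq, hx]; simp
    | mem x hx =>
      intro h
      obtain ⟨⟨i, b⟩, rfl⟩ := hx
      induction i using Fin.cases with
      | zero =>
        cases b
        · simp [cover, hΘa, Equiv.symm_apply_eq, twistedRotation_pow_succ_zero]
        · simp [cover, hΘb, diagonalPerm_apply, hβ]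
      | succ j =>
        simp [cover, hΘa, hΘ, Equiv.symm_apply_eq, twistedRotation_pow_zero,
          diagonalPerm_apply]
  refine (injective_iff_map_eq_one _).2 fun w hw => ?_
  simpa [hw, eq_comm] using key w 1

theorem exists_hom_ne_one (hg : 2 ≤ g) {w : SurfaceGroup g} (hw : w ≠ 1) :
    ∃ φ : SurfaceGroup g →* F₂, φ w ≠ 1 := by
  obtain ⟨k, rfl⟩ := Nat.exists_eq_add_of_le' hg
  obtain ⟨φ, hφ⟩ := exists_hom_ne_one_two ((map_ne_one_iff _ (cover_injective k)).2 hw)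
  exact ⟨φ.comp (cover k), hφ⟩

end SurfaceGroup

/-! ### Cyclic algebras -/

section CyclicOrder

variable {R : Type*} [CommRing R] {k : ℕ}

/-- The nonzero entries `1, …, 1, X` of `cyclicShift`. -/
noncomputable def cyclicWeight (i : Fin (k + 1)) : Polynomial R :=
  if i = Fin.last k then Polynomial.X else 1

/-- The cyclic permutation matrix weighted by `cyclicWeight`, whose `(k + 1)`-st power is the
scalar `X`: the matrix of the symbol `τ` of a cyclic algebra. -/
noncomputable def cyclicShift : Matrix (Fin (k + 1)) (Fin (k + 1)) (Polynomial R) :=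
  of fun i j => if j = i + 1 then cyclicWeight i else 0

theorem map_cyclicWeight (σ : R →+* R) (i : Fin (k + 1)) :
    (cyclicWeight i : Polynomial R).map σ = cyclicWeight i := by
  unfold cyclicWeight; split_ifs <;> simp

theorem cyclicShift_mul_apply (M : Matrix (Fin (k + 1)) (Fin (k + 1)) (Polynomial R))
    (i j : Fin (k + 1)) :
    (cyclicShift * M : Matrix _ _ (Polynomial R)) i j = cyclicWeight i * M (i + 1) j := by
  simp [mul_apply, cyclicShift]

theorem mul_cyclicShift_apply (M : Matrix (Fin (k + 1)) (Fin (k + 1)) (Polynomial R))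
    (i j : Fin (k + 1)) :
    (M * cyclicShift : Matrix _ _ (Polynomial R)) i (j + 1) = M i j * cyclicWeight j := by
  simp [mul_apply, cyclicShift]

theorem map_cyclicShift (σ : R →+* R) :
    (Polynomial.mapRingHom σ).mapMatrix (cyclicShift (k := k)) = cyclicShift := by
  ext1 i j
  simp only [RingHom.mapMatrix_apply, map_apply, cyclicShift, of_apply]
  split_ifs
  · exact map_cyclicWeight σ i
  · exact map_zero _

/-- The order of the cyclic algebra attached to `σ`, in its split form: the matrices `M` with
`σ(M) τ = τ M` for `τ = cyclicShift`. -/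
noncomputable def cyclicOrder (k : ℕ) (σ : R →+* R) :
    Subring (Matrix (Fin (k + 1)) (Fin (k + 1)) (Polynomial R)) where
  carrier := {M | (Polynomial.mapRingHom σ).mapMatrix M * cyclicShift = cyclicShift * M}
  mul_mem' {M N} hM hN := by
    simp only [Set.mem_ofPred_eq] at *
    rw [map_mul, mul_assoc, hN, ← mul_assoc, hM, mul_assoc]
  one_mem' := by simp
  add_mem' {M N} hM hN := by
    simp only [Set.mem_ofPred_eq] at *
    rw [map_add, add_mul, hM, hN, mul_add]
  zero_mem' := by simp
  neg_mem' {M} hM := by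
    simp only [Set.mem_ofPred_eq] at *
    rw [map_neg, Matrix.neg_mul, hM, Matrix.mul_neg]

variable {σ : R →+* R} {M : Matrix (Fin (k + 1)) (Fin (k + 1)) (Polynomial R)}

theorem mem_cyclicOrder :
    M ∈ cyclicOrder k σ ↔
      (Polynomial.mapRingHom σ).mapMatrix M * cyclicShift = cyclicShift * M :=
  Iff.rfl

theorem mem_cyclicOrder_iff_apply :
    M ∈ cyclicOrder k σ ↔
      ∀ i j, (M i j).map σ * cyclicWeight j = cyclicWeight i * M (i + 1) (j + 1) := by
  rw [mem_cyclicOrder]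
  constructor
  · intro h i j
    simpa [mul_cyclicShift_apply, cyclicShift_mul_apply] using congr_fun₂ h i (j + 1)
  · intro h
    ext1 i j
    obtain ⟨j, rfl⟩ : ∃ j', j = j' + 1 := ⟨j - 1, by simp⟩
    simpa [mul_cyclicShift_apply, cyclicShift_mul_apply] using h i j

theorem induction_cyclic {P : Fin (k + 1) → Prop} (zero : P 0)
    (add_one : ∀ i, P i → P (i + 1)) (i : Fin (k + 1)) : P i := by
  induction i using Fin.induction with
  | zero => exact zero
  | succ i ih => rw [← Fin.coeSucc_eq_succ]; exact add_one _ ih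

theorem coeff_zero_of_coeff_zero_map (hσ : Function.Injective σ) {p : Polynomial R}
    (h : (p.map σ).coeff 0 = 0) : p.coeff 0 = 0 :=
  hσ (by rw [← Polynomial.coeff_map, h, map_zero])

theorem coeff_zero_eq_zero_of_lt (hσ : Function.Injective σ) (hM : M ∈ cyclicOrder k σ)
    (i : Fin (k + 1)) : ∀ j < i, (M i j).coeff 0 = 0 := by
  rw [mem_cyclicOrder_iff_apply] at hM
  induction i using Fin.reverseInduction with
  | last =>
    intro j hj
    apply coeff_zero_of_coeff_zero_map hσ
    simpa [cyclicWeight, hj.ne] using congr_arg (Polynomial.coeff · 0) (hM (Fin.last k) j)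
  | cast i ih =>
    intro j hj
    obtain ⟨j, rfl⟩ := j.eq_castSucc_of_ne_last (hj.trans (Fin.castSucc_lt_last i)).ne
    apply coeff_zero_of_coeff_zero_map hσ
    have h := hM i.castSucc j.castSucc
    simp only [cyclicWeight, (Fin.castSucc_lt_last _).ne, if_false, mul_one, one_mul,
      Fin.coeSucc_eq_succ] at h
    rw [h, ih j.succ (Fin.succ_lt_succ_iff.2 hj)]

theorem exists_mul_cyclicShift_eq (hcol : ∀ i, (M i 0).coeff 0 = 0) (hM0 : ∃ i, M i 0 ≠ 0) :
    ∃ N : Matrix (Fin (k + 1)) (Fin (k + 1)) (Polynomial R), N * cyclicShift = M ∧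
      ∑ i, ∑ j, (N i j).natDegree < ∑ i, ∑ j, (M i j).natDegree := by
  let N : Matrix (Fin (k + 1)) (Fin (k + 1)) (Polynomial R) :=
    of fun i j => if j = Fin.last k then (M i 0).divX else M i (j + 1)
  have hNM : N * cyclicShift = M := by
    ext1 i j
    obtain ⟨j, rfl⟩ : ∃ j', j = j' + 1 := ⟨j - 1, by simp⟩
    rw [mul_cyclicShift_apply]
    by_cases hj : j = Fin.last k
    · subst hj
      simpa [N, cyclicWeight, hcol i] using Polynomial.divX_mul_X_add (M i 0)
    · simp [N, cyclicWeight, hj]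
  have hrow (i) : ∑ j, (M i j).natDegree = ∑ j : Fin (k + 1), (M i (j + 1)).natDegree :=
    (Equiv.sum_comp (Equiv.addRight 1) fun j => (M i j).natDegree).symm
  have hle (i j) : (N i j).natDegree ≤ (M i (j + 1)).natDegree := by
    by_cases hj : j = Fin.last k
    · simp [N, hj, Polynomial.natDegree_divX_eq_natDegree_tsub_one]
    · simp [N, hj]
  obtain ⟨i, hi⟩ := hM0
  have hlt : (N i (Fin.last k)).natDegree < (M i (Fin.last k + 1)).natDegree := by
    have hpos : (M i 0).natDegree ≠ 0 := fun h =>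
      hi (by rw [Polynomial.eq_C_of_natDegree_eq_zero h, hcol i, Polynomial.C_0])
    simp only [N, of_apply, if_true, Polynomial.natDegree_divX_eq_natDegree_tsub_one,
      Fin.last_add_one]
    omega
  refine ⟨N, hNM, ?_⟩
  simp only [hrow]
  exact Finset.sum_lt_sum (fun i _ => Finset.sum_le_sum fun j _ => hle i j)
    ⟨i, Finset.mem_univ _, Finset.sum_lt_sum (fun j _ => hle i j)
      ⟨Fin.last k, Finset.mem_univ _, hlt⟩⟩

section IsDomain

variable [IsDomain R]

theorem cyclicWeight_ne_zero (i : Fin (k + 1)) : (cyclicWeight i : Polynomial R) ≠ 0 := by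
  unfold cyclicWeight; split_ifs
  exacts [Polynomial.X_ne_zero, one_ne_zero]

theorem mul_cyclicShift_right_injective :
    Function.Injective fun M : Matrix (Fin (k + 1)) (Fin (k + 1)) (Polynomial R) =>
      M * cyclicShift := by
  intro M N h
  ext1 i j
  have hij := congr_fun₂ h i (j + 1)
  simp only [mul_cyclicShift_apply] at hij
  exact mul_right_cancel₀ (cyclicWeight_ne_zero j) hij

theorem det_cyclicShift_ne_zero :
    (cyclicShift : Matrix (Fin (k + 1)) (Fin (k + 1)) (Polynomial R)).det ≠ 0 := by
  intro h
  obtain ⟨v, hv, hv'⟩ := exists_mulVec_eq_zero_iff.2 h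
  refine hv (funext fun i => ?_)
  simpa [mulVec, dotProduct, cyclicShift, cyclicWeight_ne_zero] using congr_fun hv' (i - 1)

theorem adjugate_mem_cyclicOrder (hM : M ∈ cyclicOrder k σ) : M.adjugate ∈ cyclicOrder k σ := by
  rw [mem_cyclicOrder] at *
  have h := congr_arg (fun N => cyclicShift * N.adjugate * cyclicShift) hM
  simp only [adjugate_mul_distrib, ← RingHom.map_adjugate, ← mul_assoc] at h
  rw [mul_adjugate, mul_assoc (_ * _) _ cyclicShift, adjugate_mul] at h
  simp only [Matrix.smul_mul, one_mul, Matrix.mul_smul, mul_one] at h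
  exact smul_right_injective _ det_cyclicShift_ne_zero h

theorem det_smul_one_mem_cyclicOrder (hM : M ∈ cyclicOrder k σ) :
    M.det • (1 : Matrix (Fin (k + 1)) (Fin (k + 1)) (Polynomial R)) ∈ cyclicOrder k σ := by
  rw [← mul_adjugate]
  exact mul_mem hM (adjugate_mem_cyclicOrder hM)

theorem map_diag_of_mem_cyclicOrder (hM : M ∈ cyclicOrder k σ) (i : Fin (k + 1)) :
    (M i i).map σ = M (i + 1) (i + 1) := by
  have h := mem_cyclicOrder_iff_apply.1 hM i i
  rw [mul_comm] at h
  exact mul_left_cancel₀ (cyclicWeight_ne_zero i) h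

theorem exists_apply_zero_ne_zero (hM : M ∈ cyclicOrder k σ) (hM0 : M ≠ 0) : ∃ i, M i 0 ≠ 0 := by
  by_contra! hcol
  refine hM0 (Matrix.ext fun i j => ?_)
  rw [Matrix.zero_apply]
  induction j using induction_cyclic generalizing i with
  | zero => exact hcol i
  | add_one j ih =>
    have h := mem_cyclicOrder_iff_apply.1 hM (i - 1) j
    rw [ih, Polynomial.map_zero, zero_mul, sub_add_cancel] at h
    exact (mul_eq_zero.1 h.symm).resolve_left (cyclicWeight_ne_zero _)

theorem mem_cyclicOrder_of_mul_cyclicShift_mem (h : M * cyclicShift ∈ cyclicOrder k σ) :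
    M ∈ cyclicOrder k σ := by
  rw [mem_cyclicOrder, map_mul, map_cyclicShift, ← mul_assoc] at h
  exact mul_cyclicShift_right_injective (R := R) h

theorem det_ne_zero_of_coeff_zero_ne_zero (hσ : Function.Injective σ) (hM : M ∈ cyclicOrder k σ)
    (h : (M 0 0).coeff 0 ≠ 0) : M.det ≠ 0 := by
  have hdiag (i) : (M i i).coeff 0 ≠ 0 := by
    induction i using induction_cyclic with
    | zero => exact h
    | add_one i ih =>
      rw [← map_diag_of_mem_cyclicOrder hM]
      exact fun h => ih (coeff_zero_of_coeff_zero_map hσ h)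
  intro hdet
  have h0 := congr_arg Polynomial.constantCoeff hdet
  rw [RingHom.map_det, map_zero, det_of_isUpperTriangular, Finset.prod_eq_zero_iff] at h0
  · obtain ⟨i, -, hi⟩ := h0
    exact hdiag i (by simpa using hi)
  · exact fun i j hij => coeff_zero_eq_zero_of_lt hσ hM i j hij

theorem det_ne_zero_of_mem_cyclicOrder (hσ : Function.Injective σ) (hM : M ∈ cyclicOrder k σ)
    (hM0 : M ≠ 0) : M.det ≠ 0 := by
  induction hd : ∑ i, ∑ j, (M i j).natDegree using Nat.strong_induction_on generalizing M with
  | _ d ih =>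
    by_cases h00 : (M 0 0).coeff 0 = 0
    · have hcol (i) : (M i 0).coeff 0 = 0 := by
        rcases eq_or_ne i 0 with rfl | hi
        exacts [h00, coeff_zero_eq_zero_of_lt hσ hM i 0 (Fin.pos_iff_ne_zero.2 hi)]
      obtain ⟨N, rfl, hlt⟩ := exists_mul_cyclicShift_eq hcol (exists_apply_zero_ne_zero hM hM0)
      have hN0 : N ≠ 0 := by rintro rfl; simp at hM0
      rw [det_mul]
      exact mul_ne_zero
        (ih _ (hd ▸ hlt) (mem_cyclicOrder_of_mul_cyclicShift_mem hM) hN0 rfl)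
        det_cyclicShift_ne_zero
    · exact det_ne_zero_of_coeff_zero_ne_zero hσ hM h00

end IsDomain

end CyclicOrder

section Generic

variable {ι : Type*} {k : ℕ}

/-- The automorphism of `ℝ[x_{m,i,j}]` shifting both indices `i, j` cyclically. -/
noncomputable def indexShift (ι : Type*) (k : ℕ) :
    MvPolynomial (ι × Fin (k + 1) × Fin (k + 1)) ℝ →+*
      MvPolynomial (ι × Fin (k + 1) × Fin (k + 1)) ℝ :=
  (rename fun p => (p.1, p.2.1 + 1, p.2.2 + 1)).toRingHom

theorem indexShift_injective : Function.Injective (indexShift ι k) := by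
  apply rename_injective
  rintro ⟨m, i, j⟩ ⟨m', i', j'⟩ h
  simpa using h

/-- The `m`-th generic element of `cyclicOrder k (indexShift ι k)`: a generic matrix that becomes
upper triangular modulo `X`. -/
noncomputable def genericElement (k : ℕ) (m : ι) :
    Matrix (Fin (k + 1)) (Fin (k + 1))
      (Polynomial (MvPolynomial (ι × Fin (k + 1) × Fin (k + 1)) ℝ)) :=
  of fun i j => Polynomial.C (X (m, i, j)) * Polynomial.X ^ (if j < i then 1 else 0)

theorem genericElement_mem_cyclicOrder (m : ι) :
    genericElement k m ∈ cyclicOrder k (indexShift ι k) := by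
  rw [mem_cyclicOrder_iff_apply]
  intro i j
  have hmap : (genericElement k m i j).map (indexShift ι k) =
      Polynomial.C (X (m, i + 1, j + 1)) * Polynomial.X ^ (if j < i then 1 else 0) := by
    simp only [genericElement, of_apply]
    split_ifs <;> simp [indexShift]
  rw [hmap, genericElement, of_apply, mul_left_comm, mul_assoc]
  congr 1
  induction i using Fin.lastCases <;> induction j using Fin.lastCases <;>
    simp [cyclicWeight, Fin.castSucc_lt_last, (Fin.castSucc_lt_last _).ne,
      (Fin.castSucc_lt_last _).not_gt, Fin.coeSucc_eq_succ, mul_comm]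

theorem genericElement_ne_zero (m : ι) : genericElement k m ≠ 0 := fun h => by
  simpa [genericElement] using congr_fun₂ h 0 0

end Generic

/-! ### Moving a word off the eigenvalue one -/

section GenericEvaluation

variable {ι : Type*} {k : ℕ}

theorem exists_ringHom_apply_ne_zero {τ : Type*} {p : Polynomial (MvPolynomial τ ℝ)}
    (hp : p ≠ 0) : ∃ e : Polynomial (MvPolynomial τ ℝ) →+* ℝ, e p ≠ 0 := by
  obtain ⟨q, hq⟩ : ∃ q, p.eval q ≠ 0 := by
    by_contra! h
    exact hp (Polynomial.funext (by simpa using h))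
  obtain ⟨x, hx⟩ : ∃ x, eval x (p.eval q) ≠ 0 := by
    by_contra! h
    exact hq (MvPolynomial.funext (by simpa using h))
  exact ⟨(eval x).comp (Polynomial.evalRingHom q), hx⟩

theorem exists_ringHom_map_genericElement_eq (P : ι → Matrix (Fin (k + 1)) (Fin (k + 1)) ℝ) :
    ∃ e : Polynomial (MvPolynomial (ι × Fin (k + 1) × Fin (k + 1)) ℝ) →+* ℝ,
      ∀ m, P m = e.mapMatrix (genericElement k m) := by
  refine ⟨Polynomial.eval₂RingHom (eval fun p => P p.1 p.2.1 p.2.2) 1, fun m => ?_⟩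
  ext1 i j
  simp only [genericElement, RingHom.mapMatrix_apply, map_apply, of_apply]
  split_ifs <;> simp

theorem map_smul_one {m R S : Type*} [Fintype m] [DecidableEq m] [CommRing R] [CommRing S]
    (e : R →+* S) (r : R) :
    e.mapMatrix (r • (1 : Matrix m m R)) = e r • (1 : Matrix m m S) := by
  simp [smul_one_eq_diagonal, diagonal_map]

/-- Inverses of generic elements being adjugates up to a determinant, a word in generic elements
lies in the cyclic order up to a denominator `δ`. -/
theorem exists_mem_cyclicOrder_map_eq_smul_lift (w : FreeGroup ι) :
    ∃ W ∈ cyclicOrder k (indexShift ι k), ∃ δ,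
      δ • (1 : Matrix _ _ _) ∈ cyclicOrder k (indexShift ι k) ∧
      ∀ (e : _ →+* ℝ) (P : ι → GL (Fin (k + 1)) ℝ),
        (∀ m, (P m).1 = e.mapMatrix (genericElement k m)) →
          e δ ≠ 0 ∧ e.mapMatrix W = e δ • (FreeGroup.lift P w).1 := by
  induction w using FreeGroup.induction_on with
  | C1 => exact ⟨1, one_mem _, 1, by simp, fun e P _ => by simp⟩
  | of m =>
    exact ⟨genericElement k m, genericElement_mem_cyclicOrder m, 1, by simp,
      fun e P hP => by simp [← hP]⟩
  | inv_of m _ =>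
    have hm := genericElement_mem_cyclicOrder (k := k) m
    refine ⟨(genericElement k m).adjugate, adjugate_mem_cyclicOrder hm, (genericElement k m).det,
      det_smul_one_mem_cyclicOrder hm, fun e P hP => ?_⟩
    have hdet : (P m).1.det ≠ 0 := GeneralLinearGroup.det_ne_zero (P m)
    rw [RingHom.map_det, RingHom.map_adjugate, ← hP, map_inv, FreeGroup.lift_apply_of,
      coe_units_inv, inv_def, smul_smul, Ring.mul_inverse_cancel _ hdet.isUnit, one_smul]
    exact ⟨hdet, rfl⟩
  | mul x y hx hy =>
    obtain ⟨W, hW, δ, hδ, h⟩ := hx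
    obtain ⟨W', hW', δ', hδ', h'⟩ := hy
    refine ⟨W * W', mul_mem hW hW', δ * δ', ?_, fun e P hP => ?_⟩
    · rw [← one_mul (1 : Matrix _ _ _), ← smul_mul_smul_comm]
      exact mul_mem hδ hδ'
    · rw [map_mul, map_mul, (h e P hP).2, (h' e P hP).2, map_mul, Units.val_mul,
        smul_mul_smul_comm]
      exact ⟨mul_ne_zero (h e P hP).1 (h' e P hP).1, rfl⟩

/-- The cyclic order being a domain, it is enough that `w` acts nontrivially in one
representation. -/
theorem exists_det_lift_sub_one_ne_zero [Finite ι] {w : FreeGroup ι}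
    {P₀ : ι → GL (Fin (k + 1)) ℝ} (hP₀ : FreeGroup.lift P₀ w ≠ 1) :
    ∃ P : ι → GL (Fin (k + 1)) ℝ, ((FreeGroup.lift P w).1 - 1).det ≠ 0 := by
  have := Fintype.ofFinite ι
  obtain ⟨W, hW, δ, hδ, h⟩ := exists_mem_cyclicOrder_map_eq_smul_lift (k := k) w
  have hne : W - δ • 1 ≠ 0 := by
    rw [sub_ne_zero]
    rintro rfl
    obtain ⟨e, he⟩ := exists_ringHom_map_genericElement_eq fun m => (P₀ m).1
    obtain ⟨h1, h2⟩ := h e P₀ he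
    rw [map_smul_one] at h2
    exact hP₀ (Units.ext (smul_right_injective _ h1 h2).symm)
  have hdet (M) (hM : M ∈ cyclicOrder k (indexShift ι k)) (hM0 : M ≠ 0) : M.det ≠ 0 :=
    det_ne_zero_of_mem_cyclicOrder indexShift_injective hM hM0
  obtain ⟨e, he⟩ := exists_ringHom_apply_ne_zero <| mul_ne_zero (hdet _ (sub_mem hW hδ) hne) <|
    Finset.prod_ne_zero_iff.2 fun m _ =>
      hdet _ (genericElement_mem_cyclicOrder (k := k) m) (genericElement_ne_zero m)
  rw [map_mul, map_prod] at he
  have hunit (m) : IsUnit (e.mapMatrix (genericElement k m)) := by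
    rw [isUnit_iff_isUnit_det, ← RingHom.map_det]
    exact (Finset.prod_ne_zero_iff.1 (right_ne_zero_of_mul he) m (Finset.mem_univ m)).isUnit
  obtain ⟨-, hword⟩ := h e (fun m => (hunit m).unit) fun m => rfl
  refine ⟨fun m => (hunit m).unit, fun h0 => left_ne_zero_of_mul he ?_⟩
  rw [RingHom.map_det, map_sub, hword, map_smul_one, ← smul_sub, det_smul, h0, mul_zero]

end GenericEvaluation

section BlockDiagonal

variable {ι κ ν R : Type*} [CommRing R] [Fintype ι] [Fintype κ] [Fintype ν] [DecidableEq ι]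
  [DecidableEq κ] [DecidableEq ν]

/-- The block-diagonal embedding of special linear groups, indexed along `e`. -/
def blockDiagonalSL (e : ι ⊕ κ ≃ ν) :
    Matrix.SpecialLinearGroup ι R × Matrix.SpecialLinearGroup κ R →*
      Matrix.SpecialLinearGroup ν R where
  toFun p := ⟨reindex e e (fromBlocks p.1 0 0 p.2), by simp⟩
  map_one' := Subtype.ext (by simp)
  map_mul' p q := Subtype.ext (by
    change _ = reindex e e _ * reindex e e _
    simp [Matrix.SpecialLinearGroup.coe_mul, fromBlocks_multiply])

theorem charpoly_blockDiagonalSL (e : ι ⊕ κ ≃ ν)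
    (p : Matrix.SpecialLinearGroup ι R × Matrix.SpecialLinearGroup κ R) :
    (blockDiagonalSL e p).1.charpoly = p.1.1.charpoly * p.2.1.charpoly := by
  change (reindex e e (fromBlocks p.1.1 0 0 p.2.1)).charpoly = _
  rw [charpoly_reindex, charpoly_fromBlocks_zero₁₂]

theorem blockDiagonalSL_injective (e : ι ⊕ κ ≃ ν) :
    Function.Injective (blockDiagonalSL (R := R) e) := by
  rintro ⟨A, B⟩ ⟨C, D⟩ h
  have hblocks := (reindex e e).injective (congr_arg Subtype.val h)
  rw [fromBlocks_inj] at hblocks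
  exact Prod.ext (Subtype.ext hblocks.1) (Subtype.ext hblocks.2.2.2)

end BlockDiagonal

namespace F₂

variable {G : Type*} [Group G]

/-- The embedding of `F₂` into the free group of rank four sending the generators to commutators of
disjoint pairs of generators. -/
def toCommutators : F₂ →* FreeGroup (Bool × Bool) :=
  FreeGroup.lift fun b => ⁅FreeGroup.of (b, false), FreeGroup.of (b, true)⁆

theorem lift_toCommutators (P : Bool × Bool → G) (z : F₂) :
    FreeGroup.lift P (toCommutators z) = FreeGroup.lift (fun b => ⁅P (b, false), P (b, true)⁆) z :=
  DFunLike.congr_fun (f := (FreeGroup.lift P).comp toCommutators)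
    (FreeGroup.ext_hom _ _ fun b => by simp [toCommutators, map_commutatorElement]) z

theorem exists_commutatorElement_eq_torusRep (b : Bool) :
    ∃ p q : SL 2 ℤ, ⁅p, q⁆ = torusGenerator b := by
  cases b
  · exact ⟨ModularGroup.T, ModularGroup.S, by decide⟩
  · exact ⟨ModularGroup.T ^ (-2 : ℤ) * ModularGroup.S * ModularGroup.T * ModularGroup.S⁻¹ *
        ModularGroup.T ^ (2 : ℤ),
      ModularGroup.T ^ (-2 : ℤ) * ModularGroup.S * ModularGroup.T ^ (2 : ℤ), by decide⟩

theorem exists_lift_toCommutators_ne_one (k : ℕ) {z : F₂} (hz : z ≠ 1) :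
    ∃ P : Bool × Bool → GL (Fin (k + 2)) ℝ, FreeGroup.lift P (toCommutators z) ≠ 1 := by
  choose p q hpq using exists_commutatorElement_eq_torusRep
  let ι : SL 2 ℤ →* GL (Fin (k + 2)) ℝ :=
    (Matrix.SpecialLinearGroup.toGL.comp ((blockDiagonalSL finSumFinEquiv).comp
      (MonoidHom.inr (SL k ℝ) (SL 2 ℝ)))).comp
      (Matrix.SpecialLinearGroup.map (Int.castRingHom ℝ))
  have hι : Function.Injective ι :=
    ((Matrix.SpecialLinearGroup.toGL_injective.comp (blockDiagonalSL_injective _)).comp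
      (Prod.mk_right_injective _)).comp Matrix.SpecialLinearGroup.map_intCast_injective
  refine ⟨fun m => ι (cond m.2 q p m.1), ?_⟩
  have hlift : FreeGroup.lift (fun b => ⁅ι (p b), ι (q b)⁆) = ι.comp torusRep :=
    FreeGroup.ext_hom _ _ fun b => by
      simp [torusRep, ← map_commutatorElement, hpq]
  rw [lift_toCommutators]
  simpa [hlift, map_eq_one_iff _ hι, map_eq_one_iff _ torusRep_injective] using hz

/-- A weak form of Borel's theorem on the dominance of word maps. -/
theorem exists_det_sub_one_ne_zero (k : ℕ) {z : F₂} (hz : z ≠ 1) :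
    ∃ ρ : F₂ →* SL (k + 2) ℝ, ((ρ z).1 - 1).det ≠ 0 := by
  obtain ⟨P₀, hP₀⟩ := exists_lift_toCommutators_ne_one k hz
  obtain ⟨P, hP⟩ := exists_det_lift_sub_one_ne_zero hP₀
  have hdet (b) : (⁅P (b, false), P (b, true)⁆ : GL _ ℝ).1.det = 1 := by
    have h : GeneralLinearGroup.det ⁅P (b, false), P (b, true)⁆ = 1 := by
      rw [map_commutatorElement, commutatorElement_eq_one_iff_mul_comm]
      exact mul_comm _ _
    exact congr_arg Units.val h
  let C (b : Bool) : SL (k + 2) ℝ := ⟨_, hdet b⟩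
  have hC : Matrix.SpecialLinearGroup.toGL.comp (FreeGroup.lift C) =
      FreeGroup.lift fun b => ⁅P (b, false), P (b, true)⁆ :=
    FreeGroup.ext_hom _ _ fun b => by
      rw [MonoidHom.comp_apply, FreeGroup.lift_apply_of, FreeGroup.lift_apply_of]
      exact Units.ext rfl
  rw [lift_toCommutators, ← hC] at hP
  exact ⟨FreeGroup.lift C, hP⟩

end F₂

/-! ### Polynomial families of representations -/

theorem diag2n_eq_mul_transvection {ι F : Type*} [Fintype ι] [DecidableEq ι] [Field F] {i j : ι}
    (hij : i ≠ j) {a : F} (ha : a ≠ 0) :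
    Matrix.SpecialLinearGroup.diag2n hij a ha =
      Matrix.SpecialLinearGroup.transvection hij (a - 1) *
        Matrix.SpecialLinearGroup.transvection hij.symm 1 *
        Matrix.SpecialLinearGroup.transvection hij (a⁻¹ - 1) *
        Matrix.SpecialLinearGroup.transvection hij.symm (-a) := by
  apply Subtype.ext
  simp only [Matrix.SpecialLinearGroup.coe_mul, Matrix.SpecialLinearGroup.transvection_coe,
    Matrix.SpecialLinearGroup.diag2n_coe, mul_add, add_mul, one_mul, mul_one,
    single_mul_single_same, single_mul_single_of_ne _ _ _ _ hij,
    single_mul_single_of_ne _ _ _ _ hij.symm, add_zero]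
  ext x y
  simp only [diagonal_apply, Matrix.add_apply, single_apply, one_apply]
  grind

theorem transvection_induction {ι F : Type*} [Fintype ι] [DecidableEq ι] [Nontrivial ι] [Field F]
    {P : Matrix.SpecialLinearGroup ι F → Prop}
    (transvection : ∀ (i j : ι) (hij : i ≠ j) (a : F),
      P (Matrix.SpecialLinearGroup.transvection hij a))
    (mul : ∀ A B, P A → P B → P (A * B)) (A : Matrix.SpecialLinearGroup ι F) : P A := by
  refine Matrix.SpecialLinearGroup.diagonal_transvection_induction' P A
    (fun i j hij a ha => ?_) transvection mul
  rw [diag2n_eq_mul_transvection]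
  exact mul _ _ (mul _ _ (mul _ _ (transvection _ _ _ _) (transvection _ _ _ _))
    (transvection _ _ _ _)) (transvection _ _ _ _)

section EvalSL

variable {n : ℕ}

/-- Evaluation at the parameter `s` of a polynomially parametrised matrix. -/
noncomputable def evalSL (s : ℝ) : SL n (Polynomial ℝ) →* SL n ℝ :=
  Matrix.SpecialLinearGroup.map (Polynomial.evalRingHom s)

theorem evalSL_apply (s : ℝ) (N : SL n (Polynomial ℝ)) (i j : Fin n) :
    evalSL s N i j = (N i j).eval s :=
  rfl

theorem evalSL_map_C (s : ℝ) (A : SL n ℝ) :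
    evalSL s (Matrix.SpecialLinearGroup.map Polynomial.C A) = A := by
  ext i j
  simp [evalSL_apply]

theorem evalSL_transvection (s : ℝ) {i j : Fin n} (hij : i ≠ j) (p : Polynomial ℝ) :
    evalSL s (Matrix.SpecialLinearGroup.transvection hij p) =
      Matrix.SpecialLinearGroup.transvection hij (p.eval s) := by
  ext x y
  rw [evalSL_apply, Matrix.SpecialLinearGroup.transvection_coe,
    Matrix.SpecialLinearGroup.transvection_coe]
  simp only [Matrix.add_apply, single_apply, one_apply]
  split_ifs <;> simp

theorem exists_evalSL_zero_eq_one (hn : 2 ≤ n) (A : SL n ℝ) :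
    ∃ N : SL n (Polynomial ℝ), evalSL 0 N = 1 ∧ evalSL 1 N = A := by
  have : Nontrivial (Fin n) := Fin.nontrivial_iff_two_le.2 hn
  induction A using transvection_induction with
  | transvection i j hij a =>
    refine ⟨Matrix.SpecialLinearGroup.transvection hij (Polynomial.C a * Polynomial.X), ?_, ?_⟩
    · simp [evalSL_transvection, Matrix.SpecialLinearGroup.transvection_coeff_zero]
    · simp [evalSL_transvection]
  | mul A B hA hB =>
    obtain ⟨N, h0, h1⟩ := hA
    obtain ⟨N', h0', h1'⟩ := hB
    exact ⟨N * N', by rw [map_mul, h0, h0', mul_one], by rw [map_mul, h1, h1']⟩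

theorem exists_polynomial_family {ι : Type*} (hn : 2 ≤ n) (ρ₀ ρ₁ : FreeGroup ι →* SL n ℝ) :
    ∃ R : FreeGroup ι →* SL n (Polynomial ℝ),
      (evalSL 0).comp R = ρ₀ ∧ (evalSL 1).comp R = ρ₁ := by
  choose N hN0 hN1 using exists_evalSL_zero_eq_one hn
  refine ⟨FreeGroup.lift fun b => N (ρ₁ (FreeGroup.of b) * (ρ₀ (FreeGroup.of b))⁻¹) *
    Matrix.SpecialLinearGroup.map Polynomial.C (ρ₀ (FreeGroup.of b)), ?_, ?_⟩
  all_goals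
    ext1 b
    rw [MonoidHom.comp_apply, FreeGroup.lift_apply_of, map_mul, evalSL_map_C]
  · rw [hN0, one_mul]
  · rw [hN1, inv_mul_cancel_right]

end EvalSL

section Generic

variable {n : ℕ}

/-- A property of representations of `F₂` which, along every polynomial family, holds for no
parameter or for all but finitely many. -/
def IsGeneric (P : (F₂ →* SL n ℝ) → Prop) : Prop :=
  ∀ R : F₂ →* SL n (Polynomial ℝ), (∃ s, P ((evalSL s).comp R)) →
    {s : ℝ | ¬ P ((evalSL s).comp R)}.Finite

/-- A property of representations of `F₂` which is open along every polynomial family. -/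
def IsOpenAlongFamilies (P : (F₂ →* SL n ℝ) → Prop) : Prop :=
  ∀ (R : F₂ →* SL n (Polynomial ℝ)) (s₀ : ℝ), P ((evalSL s₀).comp R) →
    ∀ᶠ s in nhds s₀, P ((evalSL s).comp R)

variable {P Q : (F₂ →* SL n ℝ) → Prop}

theorem IsGeneric.and (hP : IsGeneric P) (hQ : IsGeneric Q) :
    IsGeneric fun ρ => P ρ ∧ Q ρ := by
  rintro R ⟨s, hs, hs'⟩
  refine ((hP R ⟨s, hs⟩).union (hQ R ⟨s, hs'⟩)).subset fun t ht => ?_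
  by_contra h
  simp only [Set.mem_union, not_or] at h
  exact ht ⟨not_not.1 h.1, not_not.1 h.2⟩

theorem IsGeneric.exists_and_of_isOpenAlongFamilies (hn : 2 ≤ n) (hP : IsGeneric P)
    (hQ : IsOpenAlongFamilies Q) (exP : ∃ ρ, P ρ) (exQ : ∃ ρ, Q ρ) : ∃ ρ, P ρ ∧ Q ρ := by
  obtain ⟨ρ₀, h₀⟩ := exQ
  obtain ⟨ρ₁, h₁⟩ := exP
  obtain ⟨R, rfl, rfl⟩ := exists_polynomial_family hn ρ₀ ρ₁
  have hinf : {s : ℝ | Q ((evalSL s).comp R)}.Infinite := infinite_of_mem_nhds 0 (hQ R 0 h₀)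
  obtain ⟨s, hs, hs'⟩ := (hinf.sdiff (hP R ⟨1, h₁⟩)).nonempty
  exact ⟨_, not_not.1 hs', hs⟩

theorem IsGeneric.exists_and (hn : 2 ≤ n) (hP : IsGeneric P) (hQ : IsGeneric Q)
    (exP : ∃ ρ, P ρ) (exQ : ∃ ρ, Q ρ) : ∃ ρ, P ρ ∧ Q ρ := by
  obtain ⟨ρ₀, h₀⟩ := exP
  obtain ⟨ρ₁, h₁⟩ := exQ
  obtain ⟨R, rfl, rfl⟩ := exists_polynomial_family hn ρ₀ ρ₁
  obtain ⟨s, hs⟩ := ((hP R ⟨0, h₀⟩).union (hQ R ⟨1, h₁⟩)).infinite_compl.nonempty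
  simp only [Set.mem_compl_iff, Set.mem_union, not_or] at hs
  exact ⟨_, not_not.1 hs.1, not_not.1 hs.2⟩

theorem isGeneric_forall_and_exists (hn : 2 ≤ n) {ι : Type*} {P : ι → (F₂ →* SL n ℝ) → Prop}
    (S : Finset ι) (hP : ∀ i ∈ S, IsGeneric (P i)) (exP : ∀ i ∈ S, ∃ ρ, P i ρ) :
    (IsGeneric fun ρ => ∀ i ∈ S, P i ρ) ∧ ∃ ρ, ∀ i ∈ S, P i ρ := by
  classical
  induction S using Finset.induction_on with
  | empty => exact ⟨fun R _ => by simp, 1, by simp⟩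
  | insert a S _ ih =>
    obtain ⟨gen, ex⟩ := ih (fun i hi => hP i (Finset.mem_insert_of_mem hi))
      (fun i hi => exP i (Finset.mem_insert_of_mem hi))
    have gen_a := hP a (Finset.mem_insert_self a S)
    simp only [Finset.forall_mem_insert]
    exact ⟨gen_a.and gen, gen_a.exists_and hn gen (exP a (Finset.mem_insert_self a S)) ex⟩

end Generic

/-! ### Multiplicative relations between eigenvalues -/

theorem exists_eq_prod_X_sub_C {K : Type*} [Field K] [IsAlgClosed K] {n : ℕ} {p : Polynomial K}
    (hp : p.Monic) (hn : p.natDegree = n) :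
    ∃ lam : Fin n → K, p = ∏ i, (Polynomial.X - Polynomial.C (lam i)) := by
  have splits := IsAlgClosed.splits p
  obtain ⟨l, hl⟩ : ∃ l : List K, (l : Multiset K) = p.roots := Quot.exists_rep _
  obtain rfl : l.length = n := by
    rw [← Multiset.coe_card, hl, ← splits.natDegree_eq_card_roots, hn]
  refine ⟨l.get, ?_⟩
  rw [splits.eq_prod_roots_of_monic hp, ← hl, Multiset.map_coe, Multiset.prod_coe,
    ← List.prod_ofFn, ← List.ofFn_getElem_eq_map]
  rfl

section EigenvalueFamily

variable {n : ℕ} {A B : Matrix (Fin n) (Fin n) ℝ} {lam : Fin n → ℂ}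

/-- `lam` enumerates the complex eigenvalues of `A` with algebraic multiplicity. -/
def IsEigenvalueFamily (A : Matrix (Fin n) (Fin n) ℝ) (lam : Fin n → ℂ) : Prop :=
  A.charpoly.map (algebraMap ℝ ℂ) = ∏ i, (Polynomial.X - Polynomial.C (lam i))

theorem exists_isEigenvalueFamily (A : Matrix (Fin n) (Fin n) ℝ) :
    ∃ lam, IsEigenvalueFamily A lam :=
  exists_eq_prod_X_sub_C ((Matrix.charpoly_monic A).map _)
    (by rw [Polynomial.natDegree_map, Matrix.charpoly_natDegree_eq_dim, Fintype.card_fin])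

namespace IsEigenvalueFamily

theorem comp_perm (h : IsEigenvalueFamily A lam) (σ : Equiv.Perm (Fin n)) :
    IsEigenvalueFamily A (lam ∘ σ) :=
  h.trans (Equiv.prod_comp σ fun i => Polynomial.X - Polynomial.C (lam i)).symm

theorem roots_charpoly_map (h : IsEigenvalueFamily A lam) :
    (A.map (algebraMap ℝ ℂ)).charpoly.roots = Finset.univ.val.map lam := by
  rw [Matrix.charpoly_map, h, ← Polynomial.roots_multiset_prod_X_sub_C (Finset.univ.val.map lam),
    Multiset.map_map]
  rfl

theorem prod_eq_det (h : IsEigenvalueFamily A lam) : ∏ i, lam i = (A.det : ℂ) := by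
  have hdet := Matrix.det_eq_prod_roots_charpoly (A.map (algebraMap ℝ ℂ))
  rw [h.roots_charpoly_map] at hdet
  exact hdet.symm.trans ((algebraMap ℝ ℂ).map_det A).symm

theorem ne_zero (h : IsEigenvalueFamily A lam) (hA : A.det ≠ 0) (i : Fin n) : lam i ≠ 0 := by
  have hprod : ∏ i, lam i ≠ 0 := by rw [h.prod_eq_det]; exact_mod_cast hA
  exact Finset.prod_ne_zero_iff.1 hprod i (Finset.mem_univ i)

theorem det_pow_sub_one_eq_zero (h : IsEigenvalueFamily A lam) {i : Fin n} {m : ℕ}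
    (hi : lam i ^ m = 1) : (A ^ m - 1).det = 0 := by
  have hmem : lam i ∈ spectrum ℂ (A.map (algebraMap ℝ ℂ)) := by
    rw [Matrix.mem_spectrum_iff_isRoot_charpoly]
    refine Polynomial.isRoot_of_mem_roots ?_
    rw [h.roots_charpoly_map]
    exact Multiset.mem_map_of_mem lam (Finset.mem_univ i)
  have hone := spectrum.pow_mem_pow _ m hmem
  rw [hi, spectrum.mem_iff, map_one, Matrix.isUnit_iff_isUnit_det, isUnit_iff_ne_zero,
    not_not, ← neg_sub, Matrix.det_neg, mul_eq_zero] at hone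
  have hdet := hone.resolve_left (pow_ne_zero _ (neg_ne_zero.2 one_ne_zero))
  have hmap : (algebraMap ℝ ℂ).mapMatrix (A ^ m - 1) = A.map (algebraMap ℝ ℂ) ^ m - 1 := by
    rw [map_sub, map_pow, map_one]; rfl
  rw [← hmap, ← RingHom.map_det] at hdet
  exact (map_eq_zero _).1 hdet

theorem exists_comp_succAbove {A' : Matrix (Fin (n + 1)) (Fin (n + 1)) ℝ}
    {lam : Fin (n + 1) → ℂ} (h : IsEigenvalueFamily A' lam)
    (hA' : A'.charpoly = A.charpoly * (Polynomial.X - Polynomial.C 1)) :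
    ∃ i, lam i = 1 ∧ IsEigenvalueFamily A (lam ∘ i.succAbove) := by
  rw [IsEigenvalueFamily, hA', Polynomial.map_mul, Polynomial.map_sub, Polynomial.map_X,
    Polynomial.map_C, map_one] at h
  have hroot := congrArg (Polynomial.eval 1) h
  simp only [Polynomial.eval_mul, Polynomial.eval_prod, Polynomial.eval_sub, Polynomial.eval_X,
    Polynomial.eval_C, sub_self, mul_zero] at hroot
  obtain ⟨i, -, hi⟩ := Finset.prod_eq_zero_iff.1 hroot.symm
  have hi : lam i = 1 := (sub_eq_zero.1 hi).symm
  rw [Fin.prod_univ_succAbove _ i, hi, mul_comm] at h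
  exact ⟨i, hi, mul_left_cancel₀ (Polynomial.X_sub_C_ne_zero 1) h⟩

end IsEigenvalueFamily

end EigenvalueFamily

theorem exists_aeval_eq_aeval_coeff {n : ℕ} {R : Type*} [CommRing R]
    {f : MvPolynomial (Fin n) R} (hf : f.IsSymmetric) :
    ∃ Q : MvPolynomial (Fin n) R, ∀ lam : Fin n → R, aeval lam f =
      aeval (fun i : Fin n => (-1) ^ (i.1 + 1) *
        (∏ j, (Polynomial.X - Polynomial.C (lam j))).coeff (n - (i.1 + 1))) Q := by
  obtain ⟨Q, hQ⟩ := esymmAlgHom_surjective (σ := Fin n) (R := R) (n := n) (by simp) ⟨f, hf⟩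
  refine ⟨Q, fun lam => ?_⟩
  have hesymm : f = aeval (fun i : Fin n => esymm (Fin n) R (i.1 + 1)) Q := by
    rw [← esymmAlgHom_apply, hQ]
  rw [hesymm, MvPolynomial.comp_aeval_apply]
  congr 2
  ext i
  have hprod : ∏ j, (Polynomial.X - Polynomial.C (lam j)) =
      ((Finset.univ.val.map lam).map fun t => Polynomial.X - Polynomial.C t).prod := by
    rw [Multiset.map_map]; rfl
  have hcard : Multiset.card (Finset.univ.val.map lam) = n := by simp
  rw [aeval_esymm_eq_multiset_esymm, hprod,
    Multiset.prod_X_sub_C_coeff _ (by rw [hcard]; omega), hcard,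
    show n - (n - (i.1 + 1)) = i.1 + 1 by omega, ← mul_assoc, ← mul_pow]
  simp

section EigenvalueRelation

variable {n : ℕ} (c : Fin n → ℤ)

/-- For some enumeration `lam` of its complex eigenvalues, `A` satisfies the multiplicative
relation `∏ i, lam i ^ c i = 1`. -/
def HasEigenvalueRelation (A : Matrix (Fin n) (Fin n) ℝ) : Prop :=
  ∃ lam, IsEigenvalueFamily A lam ∧ ∏ i, lam i ^ c i = 1

/-- The symmetric polynomial vanishing at a family of nonzero scalars when some reordering of the
family satisfies the relation with exponents `c`. -/
noncomputable def relationPolynomial : MvPolynomial (Fin n) ℂ :=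
  ∏ σ : Equiv.Perm (Fin n), (∏ i, X (σ i) ^ (c i).toNat - ∏ i, X (σ i) ^ (-c i).toNat)

theorem isSymmetric_relationPolynomial : (relationPolynomial c).IsSymmetric := fun e => by
  simp only [relationPolynomial, map_prod, map_sub, map_pow, rename_X]
  exact Fintype.prod_equiv (Equiv.mulLeft e) _ _ fun σ => rfl

theorem zpow_eq_pow_toNat_div {F : Type*} [Field F] {x : F} (hx : x ≠ 0) (k : ℤ) :
    x ^ k = x ^ k.toNat / x ^ (-k).toNat := by
  rw [← zpow_natCast, ← zpow_natCast, ← zpow_sub₀ hx, Int.toNat_sub_toNat_neg]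

theorem aeval_relationPolynomial_eq_zero_iff {lam : Fin n → ℂ} (h0 : ∀ i, lam i ≠ 0) :
    aeval lam (relationPolynomial c) = 0 ↔
      ∃ σ : Equiv.Perm (Fin n), ∏ i, lam (σ i) ^ c i = 1 := by
  simp only [relationPolynomial, map_prod, map_sub, map_pow, aeval_X, Finset.prod_eq_zero_iff,
    Finset.mem_univ, true_and, sub_eq_zero]
  refine exists_congr fun σ => ?_
  simp only [zpow_eq_pow_toNat_div (h0 _), Finset.prod_div_distrib]
  rw [div_eq_one_iff_eq (Finset.prod_ne_zero_iff.2 fun i _ => pow_ne_zero _ (h0 _))]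

theorem exists_aeval_charpoly_coeff_eq_zero_iff :
    ∃ Q : MvPolynomial (Fin n) ℂ, ∀ A : Matrix (Fin n) (Fin n) ℝ, A.det ≠ 0 →
      (aeval (fun i : Fin n => (-1) ^ (i.1 + 1) *
        (A.charpoly.map (algebraMap ℝ ℂ)).coeff (n - (i.1 + 1))) Q = 0 ↔
          HasEigenvalueRelation c A) := by
  obtain ⟨Q, hQ⟩ := exists_aeval_eq_aeval_coeff (isSymmetric_relationPolynomial c)
  refine ⟨Q, fun A hA => ⟨fun h => ?_, ?_⟩⟩
  · obtain ⟨lam, hlam⟩ := exists_isEigenvalueFamily A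
    rw [hlam, ← hQ, aeval_relationPolynomial_eq_zero_iff c (hlam.ne_zero hA)] at h
    obtain ⟨σ, hσ⟩ := h
    exact ⟨lam ∘ σ, hlam.comp_perm σ, hσ⟩
  · rintro ⟨lam, hlam, hc⟩
    rw [hlam, ← hQ, aeval_relationPolynomial_eq_zero_iff c (hlam.ne_zero hA)]
    exact ⟨1, hc⟩

theorem exists_eval_eq_zero_iff_hasEigenvalueRelation (N : SL n (Polynomial ℝ)) :
    ∃ q : Polynomial ℂ, ∀ s : ℝ,
      q.eval (s : ℂ) = 0 ↔ HasEigenvalueRelation c (evalSL s N).1 := by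
  obtain ⟨Q, hQ⟩ := exists_aeval_charpoly_coeff_eq_zero_iff c
  refine ⟨aeval (fun i : Fin n => (-1) ^ (i.1 + 1) *
    (N.1.charpoly.coeff (n - (i.1 + 1))).map (algebraMap ℝ ℂ)) Q, fun s => ?_⟩
  have hdet : (evalSL s N).1.det ≠ 0 := by rw [(evalSL s N).2]; exact one_ne_zero
  have hcharpoly : (evalSL s N).1.charpoly = N.1.charpoly.map (Polynomial.evalRingHom s) :=
    Matrix.charpoly_map ..
  rw [← hQ _ hdet, ← Polynomial.coe_aeval_eq_eval, MvPolynomial.comp_aeval_apply, hcharpoly]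
  refine Eq.congr_left (congrArg (fun f => aeval f Q) (funext fun i => ?_))
  simp only [Polynomial.coe_aeval_eq_eval, Polynomial.eval_mul, Polynomial.eval_pow,
    Polynomial.eval_neg, Polynomial.eval_one, Polynomial.coeff_map, Polynomial.eval_map]
  congr 1
  exact Polynomial.eval₂_at_apply (algebraMap ℝ ℂ) s

theorem isGeneric_not_hasEigenvalueRelation (z : F₂) :
    IsGeneric fun ρ : F₂ →* SL n ℝ => ¬ HasEigenvalueRelation c (ρ z).1 := by
  rintro R ⟨s₀, h₀⟩
  obtain ⟨q, hq⟩ := exists_eval_eq_zero_iff_hasEigenvalueRelation c (R z)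
  have hq0 : q ≠ 0 := by
    rintro rfl
    exact h₀ ((hq s₀).1 Polynomial.eval_zero)
  refine ((q.rootSet_finite ℂ).preimage Complex.ofReal_injective.injOn).subset fun s hs => ?_
  rw [Set.mem_preimage, Polynomial.mem_rootSet, Polynomial.coe_aeval_eq_eval]
  exact ⟨hq0, (hq s).2 (not_not.1 hs)⟩

end EigenvalueRelation

theorem zpow_sub_eq_one_of_prod_zpow_eq_one {n : ℕ} {F : Type*} [Field F] {lam : Fin (n + 1) → F}
    (h0 : ∀ i, lam i ≠ 0) (hprod : ∏ i, lam i = 1) {c : Fin (n + 1) → ℤ} {i : Fin (n + 1)} {k : ℤ}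
    (hk : ∀ j, c (i.succAbove j) = k) (hc : ∏ j, lam j ^ c j = 1) :
    lam i ^ (c i - k) = 1 := by
  have hprod_zpow : ∏ j, lam j ^ k = 1 := by rw [Finset.prod_zpow, hprod, _root_.one_zpow]
  rw [Fin.prod_univ_succAbove _ i] at hc hprod_zpow
  simp only [hk] at hc
  rw [zpow_sub₀ (h0 _), div_eq_one_iff_eq (zpow_ne_zero _ (h0 _))]
  exact mul_right_cancel₀ (Finset.prod_ne_zero_iff.2 fun j _ => zpow_ne_zero _ (h0 _))
    (hc.trans hprod_zpow.symm)

theorem exists_not_hasEigenvalueRelation_of_forall_succAbove {k : ℕ} {z : F₂} (hz : z ≠ 1)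
    {c : Fin (k + 2) → ℤ} {i : Fin (k + 2)} {b : ℤ} (hb : ∀ j, c (i.succAbove j) = b)
    (hi : c i ≠ b) : ∃ ρ : F₂ →* SL (k + 2) ℝ, ¬ HasEigenvalueRelation c (ρ z).1 := by
  have hm : (c i - b).natAbs ≠ 0 := Int.natAbs_ne_zero.2 (sub_ne_zero.2 hi)
  have hzm : z ^ (c i - b).natAbs ≠ 1 := fun h =>
    hz (pow_left_injective (M := F₂) hm (by simpa using h))
  obtain ⟨ρ, hρ⟩ := F₂.exists_det_sub_one_ne_zero k hzm
  refine ⟨ρ, ?_⟩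
  rintro ⟨lam, hlam, hc⟩
  have hdet : (ρ z).1.det = 1 := (ρ z).2
  have hprod : ∏ j, lam j = 1 := by rw [hlam.prod_eq_det, hdet, Complex.ofReal_one]
  have hzpow := zpow_sub_eq_one_of_prod_zpow_eq_one (hlam.ne_zero (by simp [hdet])) hprod hb hc
  have hpow : lam i ^ (c i - b).natAbs = 1 := by
    rcases Int.natAbs_eq (c i - b) with h | h <;> rw [h] at hzpow
    · rwa [zpow_natCast] at hzpow
    · rwa [_root_.zpow_neg, zpow_natCast, inv_eq_one] at hzpow
  rw [map_pow] at hρ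
  exact hρ (hlam.det_pow_sub_one_eq_zero hpow)

theorem exists_not_hasEigenvalueRelation_succ {n : ℕ} (hn : 2 ≤ n) {z : F₂}
    {c : Fin (n + 1) → ℤ} (hc : ∀ i : Fin (n + 1), ∃ ρ : F₂ →* SL n ℝ,
      ¬ HasEigenvalueRelation (c ∘ i.succAbove) (ρ z).1) :
    ∃ ρ : F₂ →* SL (n + 1) ℝ, ¬ HasEigenvalueRelation c (ρ z).1 := by
  obtain ⟨-, ρ, hρ⟩ := isGeneric_forall_and_exists hn Finset.univ
    (fun i _ => isGeneric_not_hasEigenvalueRelation (c ∘ i.succAbove) z) fun i _ => hc i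
  refine ⟨(blockDiagonalSL finSumFinEquiv).comp (ρ.prod (1 : F₂ →* SL 1 ℝ)), ?_⟩
  rintro ⟨lam, hlam, hprod⟩
  have hcharpoly : (blockDiagonalSL finSumFinEquiv (ρ z, (1 : SL 1 ℝ))).1.charpoly =
      (ρ z).1.charpoly * (Polynomial.X - Polynomial.C 1) := by
    rw [charpoly_blockDiagonalSL, Matrix.SpecialLinearGroup.coe_one, Matrix.charpoly_one]
    simp
  obtain ⟨i, hi, hlam_i⟩ := hlam.exists_comp_succAbove hcharpoly
  rw [Fin.prod_univ_succAbove _ i, hi, _root_.one_zpow, one_mul] at hprod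
  exact hρ i (Finset.mem_univ i) ⟨_, hlam_i, hprod⟩

theorem exists_not_hasEigenvalueRelation {n : ℕ} {z : F₂} (hz : z ≠ 1) (c : Fin n → ℤ)
    (hc : ∃ i j, c i ≠ c j) : ∃ ρ : F₂ →* SL n ℝ, ¬ HasEigenvalueRelation c (ρ z).1 := by
  induction n with
  | zero => exact hc.choose.elim0
  | succ n ih =>
    obtain ⟨k, rfl⟩ : ∃ k, n = k + 1 := by
      obtain ⟨i, j, hij⟩ := hc
      refine Nat.exists_eq_succ_of_ne_zero ?_
      rintro rfl
      exact hij (congrArg c (Subsingleton.elim (α := Fin 1) i j))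
    by_cases hsub : ∀ i : Fin (k + 2), ∃ j l, (c ∘ i.succAbove) j ≠ (c ∘ i.succAbove) l
    · have hk : 2 ≤ k + 1 := by
        obtain ⟨i, j, hij⟩ := hsub 0
        exact Fin.nontrivial_iff_two_le.1 ⟨i, j, fun h => hij (by rw [h])⟩
      exact exists_not_hasEigenvalueRelation_succ hk fun i => ih _ (hsub i)
    · push Not at hsub
      obtain ⟨i, hi⟩ := hsub
      refine exists_not_hasEigenvalueRelation_of_forall_succAbove hz (fun j => hi j 0) fun h => ?_
      have hconst : ∀ j, c j = (c ∘ i.succAbove) 0 := (Fin.forall_iff_succAbove i).2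
        ⟨h, fun j => hi j 0⟩
      obtain ⟨j, l, hjl⟩ := hc
      exact hjl ((hconst j).trans (hconst l).symm)

/-! ### Distinct positive eigenvalues -/

theorem eq_prod_X_sub_C_of_injective {n : ℕ} {K : Type*} [Field K] {p : Polynomial K}
    (hp : p.Monic) (hn : p.natDegree = n) {x : Fin n → K} (hx : Function.Injective x)
    (hroot : ∀ i, p.eval (x i) = 0) : p = ∏ i, (Polynomial.X - Polynomial.C (x i)) := by
  refine Polynomial.eq_of_monic_of_dvd_of_natDegree_le (Polynomial.monic_prod_X_sub_C x _) hp
    (Finset.prod_dvd_of_coprime ((Polynomial.pairwise_coprime_X_sub_C hx).set_pairwise _)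
      fun i _ => Polynomial.dvd_iff_isRoot.2 (hroot i)) ?_
  rw [hn, Polynomial.natDegree_prod_of_monic _ _ fun i _ => Polynomial.monic_X_sub_C _]
  simp

theorem exists_pos_forall_lt {ι : Type*} [Finite ι] {f : ι → ℝ} (hf : ∀ i, 0 < f i) :
    ∃ ε > 0, ∀ i, ε < f i := by
  have h : ∀ᶠ ε in nhdsWithin (0 : ℝ) (Set.Ioi 0), ∀ i, ε < f i :=
    Filter.eventually_all.2 fun i => nhdsWithin_le_nhds (eventually_lt_nhds (hf i))
  have hpos : ∀ᶠ ε in nhdsWithin (0 : ℝ) (Set.Ioi 0), 0 < ε := self_mem_nhdsWithin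
  exact (hpos.and h).exists

theorem exists_pos_forall_two_mul_lt_abs_sub {n : ℕ} {lam : Fin n → ℝ}
    (hlam : Function.Injective lam) : ∃ ε > 0, ∀ i j, i ≠ j → 2 * ε < |lam i - lam j| := by
  obtain ⟨ε, hε, h⟩ := exists_pos_forall_lt
    (f := fun p : {p : Fin n × Fin n // p.1 ≠ p.2} => |lam p.1.1 - lam p.1.2| / 2)
    fun p => half_pos (abs_pos.2 (sub_ne_zero.2 (hlam.ne p.2)))
  exact ⟨ε, hε, fun i j hij => by linarith [h ⟨(i, j), hij⟩]⟩

theorem eval_prod_X_sub_C_mul_eval_neg {n : ℕ} {lam : Fin n → ℝ} {ε : ℝ} (hε : 0 < ε)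
    (hsep : ∀ i j, i ≠ j → 2 * ε < |lam i - lam j|) (i : Fin n) :
    (∏ j, (Polynomial.X - Polynomial.C (lam j))).eval (lam i - ε) *
      (∏ j, (Polynomial.X - Polynomial.C (lam j))).eval (lam i + ε) < 0 := by
  rw [Polynomial.eval_prod, Polynomial.eval_prod, ← Finset.prod_mul_distrib,
    ← Finset.mul_prod_erase _ _ (Finset.mem_univ i)]
  simp only [Polynomial.eval_sub, Polynomial.eval_X, Polynomial.eval_C]
  refine mul_neg_of_neg_of_pos (by nlinarith) (Finset.prod_pos fun j hj => ?_)
  have hlt : ε < |lam i - lam j| := by linarith [hsep i j (Finset.ne_of_mem_erase hj).symm]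
  have hsq : ε ^ 2 < (lam i - lam j) ^ 2 := by
    rw [← sq_abs (lam i - lam j)]
    gcongr
  nlinarith

theorem exists_mem_Icc_eval_eq_zero {p : Polynomial ℝ} {a b : ℝ} (hab : a ≤ b)
    (h : p.eval a * p.eval b < 0) : ∃ x ∈ Set.Icc a b, p.eval x = 0 := by
  have hcont : ContinuousOn (fun x => p.eval x) (Set.Icc a b) := p.continuous.continuousOn
  rcases mul_neg_iff.1 h with ⟨ha, hb⟩ | ⟨ha, hb⟩
  · exact intermediate_value_Icc' hab hcont ⟨hb.le, ha.le⟩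
  · exact intermediate_value_Icc hab hcont ⟨ha.le, hb.le⟩

theorem eventually_exists_injective_roots {n : ℕ} {T : Type*} [TopologicalSpace T]
    {p : T → Polynomial ℝ} (hp : ∀ t, (p t).Monic) (hn : ∀ t, (p t).natDegree = n)
    (hcont : ∀ x, Continuous fun t => (p t).eval x) {t₀ : T} {lam : Fin n → ℝ}
    (hlam : Function.Injective lam) (h₀ : p t₀ = ∏ i, (Polynomial.X - Polynomial.C (lam i)))
    {δ : ℝ} (hδ : 0 < δ) :
    ∀ᶠ t in nhds t₀, ∃ x : Fin n → ℝ, Function.Injective x ∧ (∀ i, |x i - lam i| ≤ δ) ∧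
      p t = ∏ i, (Polynomial.X - Polynomial.C (x i)) := by
  obtain ⟨ε', hε', hsep'⟩ := exists_pos_forall_two_mul_lt_abs_sub hlam
  obtain ⟨ε, hε, hle⟩ : ∃ ε > 0, ε ≤ ε' ∧ ε ≤ δ :=
    ⟨min ε' δ, lt_min hε' hδ, min_le_left _ _, min_le_right _ _⟩
  have hsep : ∀ i j, i ≠ j → 2 * ε < |lam i - lam j| := fun i j hij => by
    linarith [hsep' i j hij, hle.1]
  have hneg : ∀ i, (p t₀).eval (lam i - ε) * (p t₀).eval (lam i + ε) < 0 := by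
    simpa only [h₀] using eval_prod_X_sub_C_mul_eval_neg hε hsep
  have hsign : ∀ᶠ t in nhds t₀, ∀ i,
      (p t).eval (lam i - ε) * (p t).eval (lam i + ε) < 0 :=
    Filter.eventually_all.2 fun i =>
      ((hcont _).mul (hcont _)).continuousAt.eventually_lt continuousAt_const (hneg i)
  filter_upwards [hsign] with t ht
  choose x hx hx0 using fun i => exists_mem_Icc_eval_eq_zero (by linarith) (ht i)
  have hx_near : ∀ i, |x i - lam i| ≤ ε := fun i =>
    abs_le.2 ⟨by linarith [(hx i).1], by linarith [(hx i).2]⟩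
  have hinj : Function.Injective x := fun i j hij => by
    by_contra hne
    have hlam_j := hij ▸ hx_near j
    have htri := abs_sub_le (lam i) (x i) (lam j)
    rw [abs_sub_comm (lam i) (x i)] at htri
    linarith [hsep i j hne, hx_near i]
  exact ⟨x, hinj, fun i => (hx_near i).trans hle.2,
    eq_prod_X_sub_C_of_injective (hp t) (hn t) hinj hx0⟩

/-- The characteristic polynomial of `A` has pairwise distinct roots, all real and positive. -/
def HasDistinctPosEigenvalues {n : ℕ} (A : Matrix (Fin n) (Fin n) ℝ) : Prop :=
  ∃ lam : Fin n → ℝ, Function.Injective lam ∧ (∀ i, 0 < lam i) ∧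
    A.charpoly = ∏ i, (Polynomial.X - Polynomial.C (lam i))

theorem continuous_eval_charpoly_evalSL {n : ℕ} (N : SL n (Polynomial ℝ)) (x : ℝ) :
    Continuous fun s => (evalSL s N).1.charpoly.eval x := by
  have heval : ∀ s, (evalSL s N).1.charpoly.eval x =
      (N.1.charpoly.eval (Polynomial.C x)).eval s := fun s => by
    have hcharpoly : (evalSL s N).1.charpoly = N.1.charpoly.map (Polynomial.evalRingHom s) :=
      Matrix.charpoly_map ..
    have hx : x = Polynomial.evalRingHom s (Polynomial.C x) := by simp
    rw [hcharpoly, Polynomial.eval_map]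
    conv_lhs => rw [hx]
    exact Polynomial.eval₂_hom ..
  simp only [heval]
  exact Polynomial.continuous _

theorem isOpenAlongFamilies_hasDistinctPosEigenvalues {n : ℕ} (u : F₂) :
    IsOpenAlongFamilies fun ρ : F₂ →* SL n ℝ => HasDistinctPosEigenvalues (ρ u).1 := by
  rintro R s₀ ⟨lam, hinj, hpos, hlam⟩
  obtain ⟨δ, hδ, hlt⟩ := exists_pos_forall_lt hpos
  filter_upwards [eventually_exists_injective_roots (p := fun s => (evalSL s (R u)).1.charpoly)
    (fun s => Matrix.charpoly_monic _)
    (fun s => by rw [Matrix.charpoly_natDegree_eq_dim, Fintype.card_fin])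
    (continuous_eval_charpoly_evalSL (R u)) hinj hlam hδ] with s ⟨x, hx, hnear, hs⟩
  exact ⟨x, hx, fun i => by linarith [(abs_le.1 (hnear i)).1, hlt i], hs⟩

section SLTwo

theorem exists_charpoly_eq_of_two_lt_trace {A : SL 2 ℝ} (hA : 2 < A.1.trace) :
    ∃ μ, A.1.trace / 2 ≤ μ ∧
      A.1.charpoly = (Polynomial.X - Polynomial.C μ) * (Polynomial.X - Polynomial.C μ⁻¹) := by
  set T := A.1.trace with hT
  have hdisc : 0 ≤ T ^ 2 - 4 := by nlinarith
  obtain ⟨μ, hμ⟩ : ∃ μ, μ = (T + √(T ^ 2 - 4)) / 2 := ⟨_, rfl⟩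
  have hμT : T / 2 ≤ μ := by linarith [Real.sqrt_nonneg (T ^ 2 - 4)]
  have hroot : μ * (T - μ) = 1 := by
    rw [hμ]
    linear_combination (-1 / 4) * Real.sq_sqrt hdisc
  refine ⟨μ, hμT, ?_⟩
  rw [Matrix.charpoly_fin_two, A.2, ← hT, inv_eq_of_mul_eq_one_right hroot, ← hroot]
  simp only [Polynomial.C_mul, Polynomial.C_sub]
  ring

theorem trace_sq_of_specialLinearGroup {R : Type} [CommRing R] (A : SL 2 R) :
    (A ^ 2).1.trace = A.1.trace ^ 2 - 2 := by
  have hdet := A.2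
  rw [Matrix.det_fin_two] at hdet
  rw [sq A, Matrix.SpecialLinearGroup.coe_mul, Matrix.trace_fin_two, Matrix.trace_fin_two,
    Matrix.mul_apply, Matrix.mul_apply, Fin.sum_univ_two, Fin.sum_univ_two]
  linear_combination (-2) * hdet

theorem det_sub_one_of_specialLinearGroup {R : Type} [CommRing R] (A : SL 2 R) :
    (A.1 - 1).det = 2 - A.1.trace := by
  have hdet := A.2
  rw [Matrix.det_fin_two] at hdet
  rw [Matrix.trace_fin_two, Matrix.det_fin_two]
  simp only [Matrix.sub_apply, one_apply_eq, one_apply_ne zero_ne_one, one_apply_ne one_ne_zero]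
  linear_combination hdet

theorem exists_lt_abs_trace {u : F₂} (hu : u ≠ 1) (K : ℝ) :
    ∃ ρ : F₂ →* SL 2 ℝ, K < |(ρ u).1.trace| := by
  obtain ⟨ρ, hρ⟩ := F₂.exists_det_sub_one_ne_zero 0 hu
  obtain ⟨R, h0, h1⟩ := exists_polynomial_family le_rfl 1 ρ
  have heval : ∀ s, (R u).1.trace.eval s = (((evalSL s).comp R) u).1.trace := fun s => by
    rw [Matrix.trace_fin_two, Matrix.trace_fin_two, Polynomial.eval_add]
    rfl
  have heval0 : (R u).1.trace.eval 0 = 2 := by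
    rw [heval, h0, MonoidHom.one_apply, Matrix.SpecialLinearGroup.coe_one, Matrix.trace_one]
    simp
  have heval1 : (R u).1.trace.eval 1 ≠ 2 := by
    rw [det_sub_one_of_specialLinearGroup, sub_ne_zero] at hρ
    rw [heval, h1]
    exact hρ.symm
  have hdeg : 0 < (R u).1.trace.degree := by
    by_contra h
    rw [Polynomial.eq_C_of_degree_le_zero (not_lt.1 h), Polynomial.eval_C] at heval0 heval1
    exact heval1 heval0
  have hlim := Polynomial.tendsto_norm_atTop _ hdeg (z := fun s : ℝ => s) tendsto_norm_atTop_atTop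
  obtain ⟨s, hs⟩ := (hlim.eventually_gt_atTop K).exists
  exact ⟨(evalSL s).comp R, by rwa [← heval]⟩

theorem exists_charpoly_sq_eq {u : F₂} (hu : u ≠ 1) (K : ℝ) :
    ∃ (τ : F₂ →* SL 2 ℝ) (μ : ℝ), K < μ ∧ 1 < μ ∧ (τ (u ^ 2)).1.charpoly =
      (Polynomial.X - Polynomial.C μ) * (Polynomial.X - Polynomial.C μ⁻¹) := by
  obtain ⟨τ, hτ⟩ := exists_lt_abs_trace hu (2 * |K| + 3)
  have htrace : 2 * |K| + 2 < (τ (u ^ 2)).1.trace := by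
    have hsq : (2 * |K| + 3) ^ 2 < (τ u).1.trace ^ 2 := by
      rw [← sq_abs (τ u).1.trace]
      gcongr
    rw [map_pow, trace_sq_of_specialLinearGroup]
    nlinarith [abs_nonneg K]
  obtain ⟨μ, hμ, hcharpoly⟩ := exists_charpoly_eq_of_two_lt_trace
    (by linarith [abs_nonneg K] : 2 < (τ (u ^ 2)).1.trace)
  exact ⟨τ, μ, by linarith [le_abs_self K], by linarith [abs_nonneg K], hcharpoly⟩

end SLTwo

theorem hasDistinctPosEigenvalues_blockDiagonalSL {n k m : ℕ} (e : Fin n ⊕ Fin k ≃ Fin m)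
    {A : SL n ℝ} {B : SL k ℝ} {lam : Fin n → ℝ} {μ : Fin k → ℝ}
    (hA : A.1.charpoly = ∏ i, (Polynomial.X - Polynomial.C (lam i)))
    (hB : B.1.charpoly = ∏ i, (Polynomial.X - Polynomial.C (μ i)))
    (hinj : Function.Injective (Sum.elim lam μ)) (hpos : ∀ i, 0 < Sum.elim lam μ i) :
    HasDistinctPosEigenvalues (blockDiagonalSL e (A, B)).1 := by
  refine ⟨Sum.elim lam μ ∘ e.symm, hinj.comp e.symm.injective, fun i => hpos _, ?_⟩
  rw [charpoly_blockDiagonalSL, hA, hB, ← Equiv.prod_comp e, Fintype.prod_sum_type]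
  simp

theorem injective_sumElim_inv {n : ℕ} {lam : Fin n → ℝ} (hinj : Function.Injective lam)
    (hpos : ∀ i, 0 < lam i) {μ : ℝ} (hμ : 1 < μ) (hlam : ∀ i, lam i + (lam i)⁻¹ < μ) :
    Function.Injective (Sum.elim lam ![μ, μ⁻¹]) := by
  have hμ_ne : μ ≠ μ⁻¹ := ((inv_lt_one_of_one_lt₀ hμ).trans hμ).ne'
  have hinv := fun i => inv_pos.2 (hpos i)
  refine hinj.sumElim ?_ fun i j => ?_
  · intro i j
    fin_cases i <;> fin_cases j <;> simp [hμ_ne, hμ_ne.symm]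
  · fin_cases j
    · exact fun h : lam i = μ => by linarith [hlam i, hinv i]
    · intro h
      have h : (lam i)⁻¹ = μ := inv_eq_iff_eq_inv.2 h
      linarith [hlam i, hpos i]

theorem exists_hasDistinctPosEigenvalues {u : F₂} (hu : u ≠ 1) (n : ℕ) :
    ∃ ρ : F₂ →* SL n ℝ, HasDistinctPosEigenvalues (ρ (u ^ 2)).1 := by
  induction n using Nat.twoStepInduction with
  | zero => exact ⟨1, fun _ => 1, fun i => i.elim0, fun i => i.elim0,
      by simp [Matrix.charpoly, Matrix.det_isEmpty]⟩
  | one => exact ⟨1, fun _ => 1, fun i j _ => Subsingleton.elim _ _, fun _ => one_pos,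
      by simp [Matrix.charpoly_one]⟩
  | more n ih _ =>
    obtain ⟨ρ, lam, hinj, hpos, hcharpoly⟩ := ih
    have hnonneg : ∀ i ∈ Finset.univ, 0 ≤ lam i + (lam i)⁻¹ := fun i _ =>
      (add_pos (hpos i) (inv_pos.2 (hpos i))).le
    obtain ⟨τ, μ, hK, hμ, hτ⟩ := exists_charpoly_sq_eq hu (∑ i, (lam i + (lam i)⁻¹))
    refine ⟨(blockDiagonalSL finSumFinEquiv).comp (ρ.prod τ),
      hasDistinctPosEigenvalues_blockDiagonalSL _ hcharpoly (μ := ![μ, μ⁻¹])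
        (by rw [hτ, Fin.prod_univ_two]; rfl)
        (injective_sumElim_inv hinj hpos hμ fun i =>
          (Finset.single_le_sum hnonneg (Finset.mem_univ i)).trans_lt hK) ?_⟩
    rintro (i | j)
    · exact hpos i
    · have hμ0 : 0 < μ := one_pos.trans hμ
      fin_cases j
      · exact hμ0
      · exact inv_pos.2 hμ0

/-! ### The Lie algebra of the Zariski closure -/

section LieAlgebra

attribute [local instance] LieRing.ofAssociativeRing

variable {n : ℕ}

/-- Polynomial functions on `n × n` real matrices, in the matrix entries. -/
abbrev MatrixPolynomial (n : ℕ) := MvPolynomial (Fin n × Fin n) ℝ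

/-- Evaluation of a polynomial function at a matrix. -/
noncomputable def evalMatrix (M : Matrix (Fin n) (Fin n) ℝ) : MatrixPolynomial n →ₐ[ℝ] ℝ :=
  aeval fun q => M q.1 q.2

/-- Right translation `p ↦ p (· * g)` of polynomial functions. -/
noncomputable def rightTranslate (g : Matrix (Fin n) (Fin n) ℝ) :
    MatrixPolynomial n →ₐ[ℝ] MatrixPolynomial n :=
  aeval fun q => ∑ k, X (q.1, k) * C (g k q.2)

theorem evalMatrix_rightTranslate (M g : Matrix (Fin n) (Fin n) ℝ) (p : MatrixPolynomial n) :
    evalMatrix M (rightTranslate g p) = evalMatrix (M * g) p := by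
  have hcomp : (evalMatrix M).comp (rightTranslate g) = evalMatrix (M * g) := by
    ext ⟨i, j⟩
    simp [evalMatrix, rightTranslate, Matrix.mul_apply]
  exact DFunLike.congr_fun hcomp p

/-- The left-invariant vector field on `n × n` matrices with value `Y` at the identity. -/
noncomputable def leftInvariantDerivation (Y : Matrix (Fin n) (Fin n) ℝ) :
    Derivation ℝ (MatrixPolynomial n) (MatrixPolynomial n) :=
  mkDerivation ℝ fun q => ∑ k, X (q.1, k) * C (Y k q.2)

theorem leftInvariantDerivation_X (Y : Matrix (Fin n) (Fin n) ℝ) (i j : Fin n) :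
    leftInvariantDerivation Y (X (i, j)) = ∑ k, X (i, k) * C (Y k j) :=
  mkDerivation_X ..

theorem leftInvariantDerivation_add (Y Z : Matrix (Fin n) (Fin n) ℝ) :
    leftInvariantDerivation (Y + Z) = leftInvariantDerivation Y + leftInvariantDerivation Z := by
  ext1 ⟨i, j⟩
  simp [leftInvariantDerivation_X, mul_add, Finset.sum_add_distrib]

theorem leftInvariantDerivation_smul (c : ℝ) (Y : Matrix (Fin n) (Fin n) ℝ) :
    leftInvariantDerivation (c • Y) = c • leftInvariantDerivation Y := by
  ext1 ⟨i, j⟩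
  simp [leftInvariantDerivation_X, Finset.smul_sum, smul_eq_C_mul, mul_left_comm]

theorem leftInvariantDerivation_comp_X (Y Z : Matrix (Fin n) (Fin n) ℝ) (i j : Fin n) :
    leftInvariantDerivation Y (leftInvariantDerivation Z (X (i, j))) =
      ∑ k, X (i, k) * C ((Y * Z) k j) := by
  simp only [leftInvariantDerivation_X, map_sum, Derivation.leibniz, smul_eq_mul, derivation_C,
    mul_zero, zero_add, Matrix.mul_apply, Finset.mul_sum, C_mul]
  rw [Finset.sum_comm]
  exact Finset.sum_congr rfl fun k _ => Finset.sum_congr rfl fun l _ => by ring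

theorem leftInvariantDerivation_lie (Y Z : Matrix (Fin n) (Fin n) ℝ) :
    leftInvariantDerivation ⁅Y, Z⁆ = ⁅leftInvariantDerivation Y, leftInvariantDerivation Z⁆ := by
  ext1 ⟨i, j⟩
  rw [Ring.lie_def, Derivation.commutator_apply, leftInvariantDerivation_comp_X,
    leftInvariantDerivation_comp_X, leftInvariantDerivation_X, ← Finset.sum_sub_distrib]
  exact Finset.sum_congr rfl fun k _ => by rw [Matrix.sub_apply, C_sub, mul_sub]

/-- Restriction of polynomial functions to the line `s ↦ M + s • Z`. -/
noncomputable def restrictLine (M Z : Matrix (Fin n) (Fin n) ℝ) :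
    MatrixPolynomial n →ₐ[ℝ] Polynomial ℝ :=
  aeval fun q => Polynomial.C (M q.1 q.2) + Polynomial.X * Polynomial.C (Z q.1 q.2)

theorem eval_restrictLine (M Z : Matrix (Fin n) (Fin n) ℝ) (s : ℝ) (p : MatrixPolynomial n) :
    (restrictLine M Z p).eval s = evalMatrix (M + s • Z) p := by
  have hcomp : (Polynomial.aeval s).comp (restrictLine M Z) = evalMatrix (M + s • Z) := by
    ext ⟨i, j⟩
    simp [evalMatrix, restrictLine, -Polynomial.X_mul_C, -mul_eq_mul_left_iff, mul_comm s]
  exact DFunLike.congr_fun hcomp p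

theorem eval_zero_restrictLine (M Z : Matrix (Fin n) (Fin n) ℝ) (p : MatrixPolynomial n) :
    (restrictLine M Z p).eval 0 = evalMatrix M p := by
  rw [eval_restrictLine, zero_smul, add_zero]

theorem restrictLine_rightTranslate (M Z g : Matrix (Fin n) (Fin n) ℝ) (p : MatrixPolynomial n) :
    restrictLine M Z (rightTranslate g p) = restrictLine (M * g) (Z * g) p := by
  have hcomp : (restrictLine M Z).comp (rightTranslate g) = restrictLine (M * g) (Z * g) := by
    apply MvPolynomial.algHom_ext
    rintro ⟨i, j⟩
    simp only [restrictLine, rightTranslate, AlgHom.comp_apply, aeval_X, map_sum, map_mul,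
      Matrix.mul_apply, Finset.mul_sum, ← Finset.sum_add_distrib, algHom_C,
      Polynomial.algebraMap_eq]
    exact Finset.sum_congr rfl fun k _ => by ring
  exact DFunLike.congr_fun hcomp p

theorem derivative_eq_of_forall_X {σ R B : Type*} [CommRing R] [CommRing B] [Algebra R B]
    (ψ : Polynomial R →ₐ[R] B) (f : MvPolynomial σ R →ₐ[R] Polynomial R)
    (D : Derivation R (MvPolynomial σ R) (MvPolynomial σ R))
    (h : ∀ i, ψ (Polynomial.derivative (f (X i))) = ψ (f (D (X i)))) (p : MvPolynomial σ R) :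
    ψ (Polynomial.derivative (f p)) = ψ (f (D p)) := by
  induction p using MvPolynomial.induction_on with
  | C a => simp
  | add p q hp hq => simp only [map_add, hp, hq]
  | mul_X p i hp =>
    rw [map_mul, Polynomial.derivative_mul, Derivation.leibniz]
    simp only [map_add, map_mul, smul_eq_mul, hp, h]
    ring

theorem eval_zero_derivative_restrictLine (M Y : Matrix (Fin n) (Fin n) ℝ)
    (p : MatrixPolynomial n) :
    (Polynomial.derivative (restrictLine M (M * Y) p)).eval 0 =
      evalMatrix M (leftInvariantDerivation Y p) := by
  rw [← eval_zero_restrictLine M (M * Y) (leftInvariantDerivation Y p)]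
  refine derivative_eq_of_forall_X (Polynomial.aeval 0) _ _ (fun ⟨i, j⟩ => ?_) p
  rw [leftInvariantDerivation_X]
  simp [restrictLine, Matrix.mul_apply]

theorem derivative_restrictLine {M Y : Matrix (Fin n) (Fin n) ℝ} (hY : Y * Y = 0)
    (p : MatrixPolynomial n) :
    Polynomial.derivative (restrictLine M (M * Y) p) =
      restrictLine M (M * Y) (leftInvariantDerivation Y p) := by
  refine derivative_eq_of_forall_X (AlgHom.id ℝ _) _ _ (fun ⟨i, j⟩ => ?_) p
  have hzero : ∑ k, (M * Y) i k * Y k j = 0 := by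
    rw [← Matrix.mul_apply, Matrix.mul_assoc, hY, Matrix.mul_zero, Matrix.zero_apply]
  have hmul : ∑ k, M i k * Y k j = (M * Y) i j := Matrix.mul_apply.symm
  simp only [AlgHom.id_apply, leftInvariantDerivation_X, map_sum, restrictLine, map_mul, aeval_X,
    algHom_C, Polynomial.algebraMap_eq, add_mul, Finset.sum_add_distrib, mul_assoc]
  simp only [← Polynomial.C_mul, ← Finset.mul_sum, ← map_sum, hzero, hmul]
  simp

/-- The polynomial function `p` vanishes on the subgroup `H`. -/
def VanishesOn (H : Subgroup (SL n ℝ)) (p : MatrixPolynomial n) : Prop :=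
  ∀ h ∈ H, evalMatrix h.1 p = 0

variable {H : Subgroup (SL n ℝ)} {p : MatrixPolynomial n} {Y : Matrix (Fin n) (Fin n) ℝ}

theorem VanishesOn.rightTranslate (hp : VanishesOn H p) {g : SL n ℝ} (hg : g ∈ H) :
    VanishesOn H (rightTranslate g.1 p) := fun h hh => by
  rw [evalMatrix_rightTranslate]
  exact hp (h * g) (H.mul_mem hh hg)

/-- The Lie algebra of the Zariski closure of `H`: the matrices whose left-invariant vector fields
preserve the ideal of polynomial functions vanishing on `H`. -/
noncomputable def zariskiLieAlgebra (H : Subgroup (SL n ℝ)) :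
    LieSubalgebra ℝ (Matrix (Fin n) (Fin n) ℝ) where
  carrier := {Y | ∀ p, VanishesOn H p → VanishesOn H (leftInvariantDerivation Y p)}
  add_mem' hY hZ p hp h hh := by
    rw [leftInvariantDerivation_add, Derivation.add_apply, map_add, hY p hp h hh, hZ p hp h hh,
      add_zero]
  zero_mem' p _ h _ := by
    rw [← zero_smul ℝ (0 : Matrix (Fin n) (Fin n) ℝ), leftInvariantDerivation_smul, zero_smul,
      Derivation.zero_apply, map_zero]
  smul_mem' c Y hY p hp h hh := by
    rw [leftInvariantDerivation_smul, Derivation.smul_apply, map_smul, hY p hp h hh, smul_zero]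
  lie_mem' {Y Z} hY hZ p hp h hh := by
    rw [leftInvariantDerivation_lie, Derivation.commutator_apply, map_sub, hY _ (hZ p hp) h hh,
      hZ _ (hY p hp) h hh, sub_zero]

theorem conj_mem_zariskiLieAlgebra (hY : Y ∈ zariskiLieAlgebra H) {g : SL n ℝ} (hg : g ∈ H) :
    g.1 * Y * (g⁻¹).1 ∈ zariskiLieAlgebra H := fun p hp h hh => by
  have hcancel : (h * g).1 * (g⁻¹).1 = h.1 := congrArg Subtype.val (mul_inv_cancel_right h g)
  have hmul : h.1 * (g.1 * Y * (g⁻¹).1) = (h * g).1 * Y * (g⁻¹).1 := by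
    simp only [Matrix.SpecialLinearGroup.coe_mul, Matrix.mul_assoc]
  rw [← eval_zero_derivative_restrictLine, hmul]
  nth_rw 1 [← hcancel]
  rw [← restrictLine_rightTranslate, eval_zero_derivative_restrictLine]
  exact hY _ (hp.rightTranslate (H.inv_mem hg)) (h * g) (H.mul_mem hh hg)

theorem restrictLine_eq_zero (hY : Y ∈ zariskiLieAlgebra H) (hYY : Y * Y = 0) {h : SL n ℝ}
    (hh : h ∈ H) (hp : VanishesOn H p) : restrictLine h.1 (h.1 * Y) p = 0 := by
  suffices ∀ d p, VanishesOn H p → (restrictLine h.1 (h.1 * Y) p).natDegree ≤ d →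
      Polynomial.derivative (restrictLine h.1 (h.1 * Y) p) = 0 by
    have hconst := Polynomial.eq_C_of_derivative_eq_zero (this _ p hp le_rfl)
    rw [hconst, Polynomial.coeff_zero_eq_eval_zero, eval_zero_restrictLine, hp h hh,
      Polynomial.C_0]
  intro d
  induction d with
  | zero => exact fun p _ hd => Polynomial.derivative_of_natDegree_zero (Nat.le_zero.1 hd)
  | succ d ih =>
    intro p hp hd
    have hderiv := derivative_restrictLine (M := h.1) hYY p
    have hconst := Polynomial.eq_C_of_derivative_eq_zero (ih _ (hY p hp) (by
      rw [← hderiv]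
      exact (Polynomial.natDegree_derivative_le _).trans (Nat.sub_le_of_le_add hd)))
    rw [hderiv, hconst, Polynomial.coeff_zero_eq_eval_zero, eval_zero_restrictLine,
      hY p hp h hh, Polynomial.C_0]

theorem VanishesOn.rightTranslate_transvection {i j : Fin n} (hij : i ≠ j)
    (hE : single i j 1 ∈ zariskiLieAlgebra H) (hp : VanishesOn H p) (a : ℝ) :
    VanishesOn H
      (_root_.rightTranslate (Matrix.SpecialLinearGroup.transvection hij a).1 p) := fun h hh => by
  have hline := restrictLine_eq_zero hE (single_mul_single_of_ne _ _ _ _ hij.symm _) hh hp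
  have hsingle : single i j a = a • single i j (1 : ℝ) := by
    rw [smul_single, smul_eq_mul, mul_one]
  rw [evalMatrix_rightTranslate, Matrix.SpecialLinearGroup.transvection_coe, mul_add, mul_one,
    hsingle, Matrix.mul_smul, ← eval_restrictLine, hline, Polynomial.eval_zero]

theorem isZariskiDense_of_single_mem (hn : 2 ≤ n)
    (hE : ∀ i j, i ≠ j → single i j 1 ∈ zariskiLieAlgebra H) : IsZariskiDense n H := by
  have : Nontrivial (Fin n) := Fin.nontrivial_iff_two_le.2 hn
  have htranslate : ∀ M : SL n ℝ, ∀ p, VanishesOn H p → VanishesOn H (rightTranslate M.1 p) := by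
    intro M
    induction M using transvection_induction with
    | transvection i j hij a => exact fun p hp => hp.rightTranslate_transvection hij (hE i j hij) a
    | mul A B hA hB =>
      intro p hp h hh
      have hAB := hA _ (hB p hp) h hh
      rwa [evalMatrix_rightTranslate, evalMatrix_rightTranslate, Matrix.mul_assoc,
        ← Matrix.SpecialLinearGroup.coe_mul, ← evalMatrix_rightTranslate] at hAB
  intro p hp M
  have hM := htranslate M p (fun h hh => hp h hh) 1 H.one_mem
  rwa [evalMatrix_rightTranslate, Matrix.SpecialLinearGroup.coe_one, Matrix.one_mul] at hM

end LieAlgebra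

section Diagonal

attribute [local instance] LieRing.ofAssociativeRing

theorem single_mem_of_mul_mem {ι F : Type*} [Finite ι] [DecidableEq ι] [Field F]
    {W : Submodule F (ι → F)} {d : ι → F} (hW : ∀ w ∈ W, d * w ∈ W) {i : ι}
    (hd : ∀ k, k ≠ i → d k ≠ d i) {w : ι → F} (hw : w ∈ W) (hwi : w i ≠ 0) :
    Pi.single i 1 ∈ W := by
  have := Fintype.ofFinite ι
  have hprod : ∀ S : Finset ι, (fun k => (∏ l ∈ S, (d k - d l)) * w k) ∈ W := by
    intro S
    induction S using Finset.induction_on with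
    | empty => simpa using hw
    | insert l S hl ih =>
      convert W.sub_mem (hW _ ih) (W.smul_mem (d l) ih) using 1
      ext k
      rw [Finset.prod_insert hl, Pi.sub_apply, Pi.mul_apply, Pi.smul_apply, smul_eq_mul]
      ring
  have hsingle : (fun k => (∏ l ∈ Finset.univ.erase i, (d k - d l)) * w k) =
      ((∏ l ∈ Finset.univ.erase i, (d i - d l)) * w i) • Pi.single i 1 := by
    ext k
    obtain rfl | hk := eq_or_ne k i
    · simp
    · rw [Finset.prod_eq_zero (Finset.mem_erase.2 ⟨hk, Finset.mem_univ k⟩) (sub_self _)]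
      simp [hk]
  have hprod_ne : (∏ l ∈ Finset.univ.erase i, (d i - d l)) * w i ≠ 0 :=
    mul_ne_zero (Finset.prod_ne_zero_iff.2 fun l hl =>
      sub_ne_zero.2 (hd l (Finset.ne_of_mem_erase hl)).symm) hwi
  exact (W.smul_mem_iff hprod_ne).1 (hsingle ▸ hprod _)

variable {n : ℕ} {H : Subgroup (SL n ℝ)} {A : SL n ℝ} {lam : Fin n → ℝ}

/-- The ratios `lam i / lam j` with `i ≠ j`, which are the eigenvalues of the conjugation by
`diagonal lam` on off-diagonal matrix units, are distinct from each other and from `1`. -/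
def HasDistinctRatios (lam : Fin n → ℝ) : Prop :=
  ∀ i j k l, i ≠ j → (k, l) ≠ (i, j) → lam k / lam l ≠ lam i / lam j

theorem HasDistinctRatios.injective (h : HasDistinctRatios lam) (hpos : ∀ i, 0 < lam i) :
    Function.Injective lam := fun i j hij => by
  by_contra hne
  refine h i j i i hne (fun heq => hne (congrArg Prod.snd heq)) ?_
  rw [hij, div_self (hpos j).ne']

theorem inv_coe_eq_diagonal (hA : A.1 = diagonal lam) : (A⁻¹).1 = diagonal lam⁻¹ := by
  have hne : ∀ i, lam i ≠ 0 := fun i hi => by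
    have hdet : A.1.det = 1 := A.2
    rw [hA, det_diagonal, Finset.prod_eq_zero (Finset.mem_univ i) hi] at hdet
    exact zero_ne_one hdet
  have hmul : A.1 * diagonal lam⁻¹ = 1 := by
    rw [hA, diagonal_mul_diagonal, ← diagonal_one]
    exact congrArg diagonal (funext fun i => mul_inv_cancel₀ (hne i))
  exact left_inv_eq_right_inv (congrArg Subtype.val (inv_mul_cancel A)) hmul

/-- Families of entries indexed by pairs, viewed as matrices. -/
def matrixOfEntries (n : ℕ) : (Fin n × Fin n → ℝ) →ₗ[ℝ] Matrix (Fin n) (Fin n) ℝ where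
  toFun f := of fun i j => f (i, j)
  map_add' _ _ := rfl
  map_smul' _ _ := rfl

theorem matrixOfEntries_apply (f : Fin n × Fin n → ℝ) (i j : Fin n) :
    matrixOfEntries n f i j = f (i, j) := rfl

theorem single_mem_zariskiLieAlgebra (hAH : A ∈ H) (hA : A.1 = diagonal lam)
    (hlam : HasDistinctRatios lam) {Y : Matrix (Fin n) (Fin n) ℝ} (hY : Y ∈ zariskiLieAlgebra H)
    {i j : Fin n} (hij : i ≠ j) (hYij : Y i j ≠ 0) : single i j 1 ∈ zariskiLieAlgebra H := by
  let W := (zariskiLieAlgebra H).toSubmodule.comap (matrixOfEntries n)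
  have hinvariant : ∀ f ∈ W, (fun q => lam q.1 / lam q.2) * f ∈ W := by
    intro f hf
    have hconj := conj_mem_zariskiLieAlgebra hf hAH
    have hmul : matrixOfEntries n ((fun q => lam q.1 / lam q.2) * f) =
        A.1 * matrixOfEntries n f * (A⁻¹).1 := by
      ext k l
      rw [hA, inv_coe_eq_diagonal hA, mul_diagonal, diagonal_mul, matrixOfEntries_apply,
        matrixOfEntries_apply, Pi.mul_apply, Pi.inv_apply, div_eq_mul_inv, mul_right_comm]
    rw [Submodule.mem_comap, hmul]
    exact hconj
  have hsingle := single_mem_of_mul_mem hinvariant (i := (i, j))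
    (fun q hq => hlam i j q.1 q.2 hij hq) (w := fun q => Y q.1 q.2) hY hYij
  have hsingle_eq : matrixOfEntries n (Pi.single (i, j) 1) = single i j 1 := by
    ext k l
    simp only [matrixOfEntries_apply, single_apply, Pi.single_apply, Prod.mk.injEq, eq_comm]
  rwa [Submodule.mem_comap, hsingle_eq] at hsingle

theorem evalMatrix_monomial (M : Matrix (Fin n) (Fin n) ℝ) (α : Fin n × Fin n →₀ ℕ) (c : ℝ) :
    evalMatrix M (monomial α c) = c * ∏ q, M q.1 q.2 ^ α q := by
  rw [evalMatrix, aeval_monomial, Finsupp.prod_fintype _ _ fun _ => pow_zero _]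
  rfl

theorem evalMatrix_eq_sum (M : Matrix (Fin n) (Fin n) ℝ) (p : MatrixPolynomial n) :
    evalMatrix M p = ∑ α ∈ p.support, coeff α p * ∏ q, M q.1 q.2 ^ α q := by
  conv_lhs => rw [p.as_sum, map_sum]
  exact Finset.sum_congr rfl fun α _ => evalMatrix_monomial M α _

theorem leftInvariantDerivation_diagonal_monomial (μ : Fin n → ℝ) (α : Fin n × Fin n →₀ ℕ)
    (c : ℝ) : leftInvariantDerivation (diagonal μ) (monomial α c) =
      C (∑ q, α q * μ q.2) * monomial α c := by
  have hX : ∀ q : Fin n × Fin n,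
      ∑ k, X (q.1, k) * C (diagonal μ k q.2) = monomial (Finsupp.single q 1) (μ q.2) := fun q => by
    rw [Finset.sum_eq_single q.2 (fun k _ hk => by rw [diagonal_apply_ne _ hk, C_0, mul_zero])
      (by simp), diagonal_apply_eq, mul_comm, C_mul_X_eq_monomial]
  rw [leftInvariantDerivation, mkDerivation_monomial, Finsupp.sum_fintype _ _ (by simp),
    Finset.smul_sum, map_sum, Finset.sum_mul]
  refine Finset.sum_congr rfl fun q _ => ?_
  rw [hX, smul_eq_mul, monomial_mul, smul_monomial, C_mul_monomial, smul_eq_mul, mul_comm c]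
  obtain hq | hq := Nat.eq_zero_or_pos (α q)
  · simp [hq]
  · rw [tsub_add_cancel_of_le (Finsupp.single_le_iff.2 hq)]

theorem sum_mul_comp_eq_zero {ι F : Type*} [Field F] {s : Finset ι} {e w : ι → F}
    (h : ∀ k : ℕ, ∑ i ∈ s, e i * w i ^ k = 0) (f : F → F) : ∑ i ∈ s, e i * f (w i) = 0 := by
  classical
  have hpoly : ∀ Q : Polynomial F, ∑ i ∈ s, e i * Q.eval (w i) = 0 := fun Q => by
    simp only [Polynomial.eval_eq_sum_range, Finset.mul_sum]
    rw [Finset.sum_comm]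
    refine Finset.sum_eq_zero fun k _ => ?_
    simp only [mul_left_comm (e _), ← Finset.mul_sum, h k, mul_zero]
  rw [← hpoly (Lagrange.interpolate (s.image w) id f)]
  exact Finset.sum_congr rfl fun i hi => by
    rw [← Lagrange.eval_interpolate_at_node f Function.injective_id.injOn
      (Finset.mem_image_of_mem w hi), id]

theorem diagonal_log_mem_zariskiLieAlgebra (hAH : A ∈ H) (hA : A.1 = diagonal lam)
    (hpos : ∀ i, 0 < lam i) : diagonal (fun i => Real.log (lam i)) ∈ zariskiLieAlgebra H := by
  intro p hp h hh
  let weight : (Fin n × Fin n →₀ ℕ) → ℝ := fun α => ∏ q, lam q.2 ^ α q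
  have hlog : ∀ α, ∑ q, (α q : ℝ) * Real.log (lam q.2) = Real.log (weight α) := fun α => by
    rw [Real.log_prod fun q _ => (pow_pos (hpos q.2) _).ne']
    simp only [Real.log_pow]
  have hpow : ∀ k : ℕ, ∑ α ∈ p.support, evalMatrix h.1 (monomial α (coeff α p)) *
      weight α ^ k = 0 := fun k => by
    have hvanish := hp (h * A ^ k) (H.mul_mem hh (H.pow_mem hAH k))
    rw [Matrix.SpecialLinearGroup.coe_mul, Matrix.SpecialLinearGroup.coe_pow, hA, diagonal_pow,
      evalMatrix_eq_sum] at hvanish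
    rw [← hvanish]
    refine Finset.sum_congr rfl fun α _ => ?_
    simp only [evalMatrix_monomial, weight, mul_diagonal, Pi.pow_apply, mul_pow,
      Finset.prod_mul_distrib, mul_assoc, ← Finset.prod_pow, ← pow_mul, mul_comm k]
  rw [← sum_mul_comp_eq_zero hpow Real.log]
  conv_lhs => rw [p.as_sum, map_sum, map_sum]
  refine Finset.sum_congr rfl fun α _ => ?_
  rw [leftInvariantDerivation_diagonal_monomial, map_mul, hlog, mul_comm, evalMatrix, algHom_C]
  rfl

end Diagonal

/-! ### Blocks and coordinate subspaces -/

section Blocks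

open scoped Pointwise

theorem charpoly_eq_toSquareBlockProp_mul {ι R : Type*} [Fintype ι] [DecidableEq ι] [CommRing R]
    (M : Matrix ι ι R) (p : ι → Prop) [DecidablePred p] (h : ∀ i, ¬ p i → ∀ j, p j → M i j = 0) :
    M.charpoly =
      (M.toSquareBlockProp p).charpoly * (M.toSquareBlockProp fun i => ¬ p i).charpoly := by
  have hblocks : Matrix.reindex (Equiv.sumCompl p).symm (Equiv.sumCompl p).symm M =
      fromBlocks (M.toSquareBlockProp p) (M.toBlock p fun i => ¬ p i) 0
        (M.toSquareBlockProp fun i => ¬ p i) := by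
    ext (i | i) (j | j)
    · rfl
    · rfl
    · exact h i i.2 j j.2
    · rfl
  rw [← charpoly_reindex (Equiv.sumCompl p).symm M, hblocks, charpoly_fromBlocks_zero₂₁]

theorem exists_charpoly_map_eq_prod {κ : Type*} [Fintype κ] [DecidableEq κ] (M : Matrix κ κ ℝ) :
    ∃ lam : κ → ℂ, M.charpoly.map (algebraMap ℝ ℂ) =
      ∏ i, (Polynomial.X - Polynomial.C (lam i)) ∧ ∏ i, lam i = (M.det : ℂ) := by
  let e := Fintype.equivFin κ
  obtain ⟨lam, hlam⟩ := exists_isEigenvalueFamily (Matrix.reindex e e M)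
  have hprod := hlam.prod_eq_det
  rw [IsEigenvalueFamily, charpoly_reindex] at hlam
  rw [det_reindex_self] at hprod
  refine ⟨lam ∘ e, ?_, ?_⟩
  · rw [hlam]
    exact (Equiv.prod_comp e fun i => Polynomial.X - Polynomial.C (lam i)).symm
  · rw [← hprod]
    exact Equiv.prod_comp e lam

theorem hasEigenvalueRelation_of_det_toSquareBlockProp {n : ℕ} {M : Matrix (Fin n) (Fin n) ℝ}
    {p : Fin n → Prop} [DecidablePred p] (h : ∀ i, ¬ p i → ∀ j, p j → M i j = 0)
    (hdet : (M.toSquareBlockProp p).det = 1) :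
    HasEigenvalueRelation (fun i => if p i then 1 else 0) M := by
  obtain ⟨mu, hmu, hmu_prod⟩ := exists_charpoly_map_eq_prod (M.toSquareBlockProp p)
  obtain ⟨nu, hnu, -⟩ := exists_charpoly_map_eq_prod (M.toSquareBlockProp fun i => ¬ p i)
  let lam : Fin n → ℂ := fun i => if hi : p i then mu ⟨i, hi⟩ else nu ⟨i, hi⟩
  have hlam_pos : ∀ i : {i // p i}, lam i = mu i := fun i => dif_pos i.2
  have hlam_neg : ∀ i : {i // ¬ p i}, lam i = nu i := fun i => dif_neg i.2
  refine ⟨lam, ?_, ?_⟩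
  · rw [IsEigenvalueFamily, charpoly_eq_toSquareBlockProp_mul M p h, Polynomial.map_mul, hmu,
      hnu, ← Fintype.prod_subtype_mul_prod_subtype p]
    simp only [hlam_pos, hlam_neg]
  · have hpos : ∀ i : {i // p i}, lam i ^ (if p i then 1 else 0 : ℤ) = mu i := fun i => by
      rw [if_pos i.2, hlam_pos, zpow_one]
    have hneg : ∀ i : {i // ¬ p i}, lam i ^ (if p i then 1 else 0 : ℤ) = 1 := fun i => by
      rw [if_neg i.2, zpow_zero]
    rw [← Fintype.prod_subtype_mul_prod_subtype p]
    simp only [hpos, hneg]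
    rw [hmu_prod, hdet, Finset.prod_const_one, mul_one, Complex.ofReal_one]

/-- The span of the standard basis vectors whose index satisfies `p`. -/
def coordinateSubspace {ι : Type*} (F : Type*) [Field F] (p : ι → Prop) : Submodule F (ι → F) :=
  Submodule.pi {i | ¬ p i} fun _ => ⊥

section CoordinateSubspace

variable {ι F : Type*} [Field F] {p : ι → Prop}

theorem mem_coordinateSubspace {w : ι → F} :
    w ∈ coordinateSubspace F p ↔ ∀ i, ¬ p i → w i = 0 :=
  Iff.rfl

theorem single_mem_coordinateSubspace [DecidableEq ι] {k : ι} (hk : p k) (c : F) :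
    Pi.single k c ∈ coordinateSubspace F p :=
  mem_coordinateSubspace.2 fun _ hi =>
    Pi.single_eq_of_ne (M := fun _ => F) (ne_of_apply_ne p fun h => hi (h.mpr hk)) c

theorem mulVec_mem_coordinateSubspace [Fintype ι] {M : Matrix ι ι F}
    (hM : ∀ i, ¬ p i → ∀ k, p k → M i k = 0) {w : ι → F} (hw : w ∈ coordinateSubspace F p) :
    M *ᵥ w ∈ coordinateSubspace F p := by
  refine mem_coordinateSubspace.2 fun i hi => Finset.sum_eq_zero fun k _ => ?_
  by_cases hk : p k
  · exact mul_eq_zero_of_left (hM i hi k hk) _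
  · exact mul_eq_zero_of_right _ (mem_coordinateSubspace.1 hw k hk)

theorem exists_eq_coordinateSubspace [Finite ι] {W : Submodule F (ι → F)} {d : ι → F}
    (hd : Function.Injective d) (hW : ∀ w ∈ W, d * w ∈ W) : ∃ p, coordinateSubspace F p = W := by
  classical
  have := Fintype.ofFinite ι
  refine ⟨fun i => Pi.single i 1 ∈ W, le_antisymm (fun w hw => ?_) fun w hw => ?_⟩
  · rw [pi_eq_sum_univ' w]
    refine W.sum_mem fun i _ => ?_
    by_cases hi : Pi.single i 1 ∈ W
    · exact W.smul_mem _ hi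
    · rw [mem_coordinateSubspace.1 hw i hi, zero_smul]
      exact W.zero_mem
  · refine mem_coordinateSubspace.2 fun i hi => ?_
    contrapose! hi
    exact single_mem_of_mul_mem hW (fun k hk => hd.ne hk) hw hi

end CoordinateSubspace

variable {n : ℕ} {F : Type} [Field F] {p : Fin n → Prop}

theorem apply_eq_zero_of_mem_stabilizer {g : SL n F}
    (hg : g ∈ MulAction.stabilizer (SL n F) (coordinateSubspace F p)) :
    ∀ i, ¬ p i → ∀ k, p k → g.1 i k = 0 := fun i hi k hk => by
  have hmem := Submodule.smul_mem_pointwise_smul _ g _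
    (single_mem_coordinateSubspace (F := F) hk 1)
  rw [MulAction.mem_stabilizer_iff.1 hg] at hmem
  have hcol := mem_coordinateSubspace.1 hmem i hi
  rwa [Matrix.SpecialLinearGroup.smul_def, smul_eq_mulVec, mulVec_single_one] at hcol

variable [DecidablePred p]

/-- The determinant of the restriction to a coordinate subspace, for elements stabilizing it. -/
def blockDet (F : Type) [Field F] (p : Fin n → Prop) [DecidablePred p] :
    MulAction.stabilizer (SL n F) (coordinateSubspace F p) →* F where
  toFun g := (g.1.1.toSquareBlockProp p).det
  map_one' := by
    have hone : (1 : Matrix (Fin n) (Fin n) F).toSquareBlockProp p = 1 := by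
      ext i k
      simp only [toSquareBlockProp_def, of_apply, one_apply, Subtype.ext_iff]
    exact (congrArg det hone).trans det_one
  map_mul' g h := by
    rw [← det_mul]
    congr 1
    ext i k
    change ∑ l, g.1.1 i l * h.1.1 l k = ∑ l : {l // p l}, g.1.1 i l * h.1.1 l k
    rw [← Fintype.sum_subtype_add_sum_subtype p, add_eq_left]
    exact Finset.sum_eq_zero fun l _ => by
      rw [apply_eq_zero_of_mem_stabilizer h.2 l l.2 k k.2, mul_zero]

theorem hasEigenvalueRelation_commutator {g h : SL n ℝ}
    (hg : g ∈ MulAction.stabilizer (SL n ℝ) (coordinateSubspace ℝ p))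
    (hh : h ∈ MulAction.stabilizer (SL n ℝ) (coordinateSubspace ℝ p)) :
    HasEigenvalueRelation (fun i => if p i then 1 else 0) ⁅g, h⁆.1 := by
  let g' : MulAction.stabilizer (SL n ℝ) (coordinateSubspace ℝ p) := ⟨g, hg⟩
  let h' : MulAction.stabilizer (SL n ℝ) (coordinateSubspace ℝ p) := ⟨h, hh⟩
  have hdet : (blockDet ℝ p).toHomUnits ⁅g', h'⁆ = 1 := by
    rw [map_commutatorElement, commutatorElement_eq_one_iff_mul_comm, mul_comm]
  exact hasEigenvalueRelation_of_det_toSquareBlockProp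
    (apply_eq_zero_of_mem_stabilizer ⁅g', h'⁆.2) (congrArg Units.val hdet)

end Blocks

theorem pow_factorial_card_smul_eq {G α β : Type*} [Group G] [MulAction G α] [Fintype β] {g : G}
    {x : α} (f : β → α) (h : ∀ k : ℕ, g ^ k • x ∈ Set.range f) :
    g ^ (Fintype.card β).factorial • x = x := by
  choose b hb using h
  obtain ⟨k, l, hkl, hbkl⟩ : ∃ k l : Fin (Fintype.card β + 1), k < l ∧ b k = b l := by
    obtain ⟨k, l, hne, heq⟩ := Fintype.exists_ne_map_eq_of_card_lt
      (fun k : Fin (Fintype.card β + 1) => b k) (by simp)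
    rcases hne.lt_or_gt with hlt | hlt
    exacts [⟨k, l, hlt, heq⟩, ⟨l, k, hlt, heq.symm⟩]
  obtain ⟨d, hd⟩ := Nat.exists_eq_add_of_lt hkl
  have hfix : g ^ (d + 1) ∈ MulAction.stabilizer G x := by
    rw [MulAction.mem_stabilizer_iff, ← smul_left_cancel_iff (g ^ k.1), smul_smul, ← pow_add,
      ← add_assoc, ← hd, ← hb, ← hb, hbkl]
  obtain ⟨t, ht⟩ := Nat.dvd_factorial d.succ_pos (show d + 1 ≤ Fintype.card β by omega)
  rw [ht, pow_mul]
  exact pow_mem hfix t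

/-! ### A criterion for Zariski density -/

section Density

attribute [local instance] LieRing.ofAssociativeRing

open scoped Pointwise

variable {n : ℕ} {H : Subgroup (SL n ℝ)} {A B : SL n ℝ} {lam : Fin n → ℝ}

theorem apply_eq_zero_of_mem_zariskiLieAlgebra (hAH : A ∈ H) (hA : A.1 = diagonal lam)
    (hlam : HasDistinctRatios lam) {Y : Matrix (Fin n) (Fin n) ℝ} (hY : Y ∈ zariskiLieAlgebra H)
    {i j k : Fin n} (hi : ¬ (i = j ∨ single i j 1 ∈ zariskiLieAlgebra H))
    (hk : k = j ∨ single k j 1 ∈ zariskiLieAlgebra H) : Y i k = 0 := by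
  by_contra hYik
  have hik : i ≠ k := fun h => hi (h ▸ hk)
  have hsingle := single_mem_zariskiLieAlgebra hAH hA hlam hY hik hYik
  obtain ⟨hij, hnotMem⟩ := not_or.1 hi
  refine hnotMem ?_
  obtain rfl | hkj := hk
  · exact hsingle
  · have hlie := (zariskiLieAlgebra H).lie_mem hsingle hkj
    rwa [Ring.lie_def, single_mul_single_same, single_mul_single_of_ne _ _ _ _ (Ne.symm hij),
      sub_zero, mul_one] at hlie

theorem mem_smul_submodule_iff {G R M : Type*} [Group G] [Semiring R] [AddCommMonoid M] [Module R M]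
    [DistribMulAction G M] [SMulCommClass G R M] {g : G} {W : Submodule R M} {w : M} :
    w ∈ g • W ↔ g⁻¹ • w ∈ W :=
  Set.mem_smul_set_iff_inv_smul_mem (A := (W : Set M))

theorem mulVec_mem_smul {W : Submodule ℝ (Fin n → ℝ)}
    (hW : ∀ Y ∈ zariskiLieAlgebra H, ∀ w ∈ W, Y *ᵥ w ∈ W) {g : SL n ℝ} (hg : g ∈ H) :
    ∀ Y ∈ zariskiLieAlgebra H, ∀ w ∈ g • W, Y *ᵥ w ∈ g • W := by
  intro Y hY w hw
  rw [mem_smul_submodule_iff] at hw ⊢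
  have hconj := hW _ (conj_mem_zariskiLieAlgebra hY (H.inv_mem hg)) _ hw
  rwa [← mulVec_mulVec, ← mulVec_mulVec, ← smul_eq_mulVec (g⁻¹)⁻¹.1,
    ← Matrix.SpecialLinearGroup.smul_def, inv_smul_smul] at hconj

theorem exists_coordinateSubspace_eq_of_mulVec_mem (hAH : A ∈ H) (hA : A.1 = diagonal lam)
    (hpos : ∀ i, 0 < lam i) (hlam : Function.Injective lam) {W : Submodule ℝ (Fin n → ℝ)}
    (hW : ∀ Y ∈ zariskiLieAlgebra H, ∀ w ∈ W, Y *ᵥ w ∈ W) :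
    ∃ p, coordinateSubspace ℝ p = W := by
  have hlog : Function.Injective fun i => Real.log (lam i) := fun i j hij =>
    hlam (Real.log_injOn_pos (hpos i) (hpos j) hij)
  refine exists_eq_coordinateSubspace hlog fun w hw => ?_
  convert hW _ (diagonal_log_mem_zariskiLieAlgebra hAH hA hpos) w hw using 1
  ext i
  rw [mulVec_diagonal, Pi.mul_apply]

theorem pow_factorial_mem_stabilizer (hAH : A ∈ H) (hA : A.1 = diagonal lam)
    (hpos : ∀ i, 0 < lam i) (hlam : Function.Injective lam) (hBH : B ∈ H)
    {W : Submodule ℝ (Fin n → ℝ)} (hW : ∀ Y ∈ zariskiLieAlgebra H, ∀ w ∈ W, Y *ᵥ w ∈ W) :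
    B ^ (2 ^ n).factorial ∈ MulAction.stabilizer (SL n ℝ) W := by
  have hcard : Fintype.card (Fin n → Prop) = 2 ^ n := by simp
  rw [← hcard]
  exact pow_factorial_card_smul_eq (coordinateSubspace ℝ) fun k =>
    exists_coordinateSubspace_eq_of_mulVec_mem hAH hA hpos hlam
      (mulVec_mem_smul hW (H.pow_mem hBH k))

theorem mem_stabilizer_of_eq_diagonal (hA : A.1 = diagonal lam) (p : Fin n → Prop) :
    A ∈ MulAction.stabilizer (SL n ℝ) (coordinateSubspace ℝ p) := by
  have hmaps : ∀ (g : SL n ℝ) (mu : Fin n → ℝ), g.1 = diagonal mu →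
      ∀ w ∈ coordinateSubspace ℝ p, g • w ∈ coordinateSubspace ℝ p := by
    intro g mu hg w hw
    rw [Matrix.SpecialLinearGroup.smul_def, smul_eq_mulVec, hg]
    exact mulVec_mem_coordinateSubspace
      (fun i hi k hk => diagonal_apply_ne _ fun h => hi (h ▸ hk)) hw
  ext w
  rw [mem_smul_submodule_iff]
  refine ⟨fun hw => ?_, hmaps _ _ (inv_coe_eq_diagonal hA) w⟩
  rw [← smul_inv_smul A w]
  exact hmaps A lam hA _ hw

/- If the matrix unit `single i j 1` were missing from the Lie algebra, the `k` with `k = j` or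
`single k j 1` in the Lie algebra would span a proper coordinate subspace stable under the Lie
algebra, hence stabilized by `A` and by the given power of `B`. -/
theorem isZariskiDense_closure_pair (hn : 2 ≤ n) (hA : A.1 = diagonal lam)
    (hpos : ∀ i, 0 < lam i) (hlam : HasDistinctRatios lam)
    (hAB : ∀ (p : Fin n → Prop) [DecidablePred p], (∃ i, p i) → (∃ i, ¬ p i) →
      ¬ HasEigenvalueRelation (fun i => if p i then 1 else 0) ⁅A, B ^ (2 ^ n).factorial⁆.1) :
    IsZariskiDense n (Subgroup.closure {A, B}) := by
  classical
  have hAH : A ∈ Subgroup.closure {A, B} := Subgroup.subset_closure (by simp)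
  have hBH : B ∈ Subgroup.closure {A, B} := Subgroup.subset_closure (by simp)
  refine isZariskiDense_of_single_mem hn fun i j hij => ?_
  by_contra hnotMem
  let p : Fin n → Prop := fun k => k = j ∨ single k j 1 ∈ zariskiLieAlgebra (.closure {A, B})
  have hW : ∀ Y ∈ zariskiLieAlgebra (.closure {A, B}), ∀ w ∈ coordinateSubspace ℝ p,
      Y *ᵥ w ∈ coordinateSubspace ℝ p := fun Y hY w hw =>
    mulVec_mem_coordinateSubspace (p := p)
      (fun k hk l hl => apply_eq_zero_of_mem_zariskiLieAlgebra hAH hA hlam hY hk hl) hw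
  exact hAB p ⟨j, .inl rfl⟩ ⟨i, not_or.2 ⟨hij, hnotMem⟩⟩
    (hasEigenvalueRelation_commutator (mem_stabilizer_of_eq_diagonal hA p)
      (pow_factorial_mem_stabilizer hAH hA hpos (hlam.injective hpos) hBH hW))

theorem IsZariskiDense.mono {K : Subgroup (SL n ℝ)} (h : IsZariskiDense n H) (hHK : H ≤ K) :
    IsZariskiDense n K := fun P hP => h P fun x hx => hP x (hHK hx)

end Density

/-! ### Representations with Zariski-dense image -/

section Independence

variable {n : ℕ} {N : ℤ} {A B : Matrix (Fin n) (Fin n) ℝ}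

/-- The eigenvalues of `A` satisfy no multiplicative relation with exponents of absolute value at
most `N`, apart from those with constant exponents, which hold whenever `A.det = 1`. -/
def EigenvaluesIndependent (N : ℤ) (A : Matrix (Fin n) (Fin n) ℝ) : Prop :=
  ∀ c : Fin n → ℤ, (∀ i, |c i| ≤ N) → (∃ i j, c i ≠ c j) → ¬ HasEigenvalueRelation c A

theorem EigenvaluesIndependent.congr_charpoly (h : EigenvaluesIndependent N A)
    (hAB : A.charpoly = B.charpoly) : EigenvaluesIndependent N B := fun c hN hc hB =>
  h c hN hc <| by simpa only [HasEigenvalueRelation, IsEigenvalueFamily, hAB] using hB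

theorem isGeneric_eigenvaluesIndependent_and_exists (hn : 2 ≤ n) (N : ℤ) {z : F₂} (hz : z ≠ 1) :
    (IsGeneric fun ρ : F₂ →* SL n ℝ => EigenvaluesIndependent N (ρ z).1) ∧
      ∃ ρ : F₂ →* SL n ℝ, EigenvaluesIndependent N (ρ z).1 := by
  classical
  let S : Finset (Fin n → ℤ) :=
    {c ∈ Fintype.piFinset fun _ => Finset.Icc (-N) N | ∃ i j, c i ≠ c j}
  have hS : ∀ A : Matrix (Fin n) (Fin n) ℝ,
      (∀ c ∈ S, ¬ HasEigenvalueRelation c A) ↔ EigenvaluesIndependent N A := fun A => by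
    simp only [S, Finset.mem_filter, Fintype.mem_piFinset, Finset.mem_Icc, ← abs_le, and_imp,
      EigenvaluesIndependent]
  simp only [← hS]
  exact isGeneric_forall_and_exists hn S (fun c _ => isGeneric_not_hasEigenvalueRelation c z)
    fun c hc => exists_not_hasEigenvalueRelation hz c (Finset.mem_filter.1 hc).2

theorem EigenvaluesIndependent.not_hasEigenvalueRelation_indicator
    (h : EigenvaluesIndependent 2 A) (p : Fin n → Prop) [DecidablePred p] (hp : ∃ i, p i)
    (hp' : ∃ i, ¬ p i) : ¬ HasEigenvalueRelation (fun i => if p i then 1 else 0) A := by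
  obtain ⟨i, hi⟩ := hp
  obtain ⟨j, hj⟩ := hp'
  refine h _ (fun k => ?_) ⟨i, j, by simp [hi, hj]⟩
  split_ifs <;> norm_num

theorem isEigenvalueFamily_diagonal (lam : Fin n → ℝ) :
    IsEigenvalueFamily (diagonal lam) fun i => (lam i : ℂ) := by
  rw [IsEigenvalueFamily, charpoly_diagonal, Polynomial.map_prod]
  simp

theorem EigenvaluesIndependent.hasDistinctRatios {lam : Fin n → ℝ} (hpos : ∀ i, 0 < lam i)
    (h : EigenvaluesIndependent 2 (diagonal lam)) : HasDistinctRatios lam := by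
  intro i j k l hij hkl heq
  let c : Fin n → ℤ := Pi.single k 1 - Pi.single l 1 - (Pi.single i 1 - Pi.single j 1)
  have hc : ∀ x, c x = (if x = k then 1 else 0) - (if x = l then 1 else 0) -
      ((if x = i then 1 else 0) - (if x = j then 1 else 0)) := fun x => by
    simp only [c, Pi.sub_apply, Pi.single_apply]
  have hbound : ∀ x, |c x| ≤ 2 := fun x => by
    rw [hc, abs_le]
    split_ifs <;> omega
  have hne : c i ≠ c j := by
    rw [Ne, Prod.mk.injEq] at hkl
    rw [hc, hc]
    split_ifs <;> omega
  have hsingle : ∀ y, ∏ x, (lam x : ℂ) ^ (Pi.single y 1 : Fin n → ℤ) x = lam y := fun y => by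
    rw [Finset.prod_eq_single y (fun x _ hx => by simp [hx]) (by simp), Pi.single_eq_same, zpow_one]
  have h0 : ∀ x, (lam x : ℂ) ≠ 0 := fun x => Complex.ofReal_ne_zero.2 (hpos x).ne'
  refine h c hbound ⟨i, j, hne⟩ ⟨_, isEigenvalueFamily_diagonal lam, ?_⟩
  simp only [c, Pi.sub_apply, zpow_sub₀ (h0 _), Finset.prod_div_distrib, hsingle]
  rw [div_eq_one_iff_eq (div_ne_zero (h0 i) (h0 j))]
  exact_mod_cast heq

end Independence

theorem exists_isUnit_det_mul_eq_mul_diagonal {n : ℕ} {A : Matrix (Fin n) (Fin n) ℝ}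
    {lam : Fin n → ℝ} (hlam : Function.Injective lam)
    (hA : A.charpoly = ∏ i, (Polynomial.X - Polynomial.C (lam i))) :
    ∃ P : Matrix (Fin n) (Fin n) ℝ, IsUnit P.det ∧ A * P = P * diagonal lam := by
  have heigenvector : ∀ i, ∃ v, Module.End.HasEigenvector (mulVecLin A) (lam i) v := fun i => by
    refine Module.End.HasEigenvalue.exists_hasEigenvector ?_
    rw [← toLin'_apply', Module.End.hasEigenvalue_iff_isRoot_charpoly, charpoly_toLin', hA,
      Polynomial.IsRoot, Polynomial.eval_prod]
    exact Finset.prod_eq_zero (Finset.mem_univ i) (by simp)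
  choose v hv using heigenvector
  refine ⟨of fun i j => v j i, (isUnit_iff_isUnit_det _).1 (linearIndependent_cols_iff_isUnit.1
    (Module.End.eigenvectors_linearIndependent' _ lam hlam v hv)), ?_⟩
  ext i j
  rw [mul_diagonal, mul_comm]
  exact congrFun (hv j).apply_eq_smul i

theorem HasDistinctPosEigenvalues.exists_conj_eq_diagonal {n : ℕ} (hn : 0 < n) {A : SL n ℝ}
    (h : HasDistinctPosEigenvalues A.1) :
    ∃ (P : SL n ℝ) (lam : Fin n → ℝ), (∀ i, 0 < lam i) ∧ (P * A * P⁻¹).1 = diagonal lam := by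
  obtain ⟨lam, hinj, hpos, hA⟩ := h
  obtain ⟨P, hP, hAP⟩ := exists_isUnit_det_mul_eq_mul_diagonal hinj hA
  -- rescaling one eigenvector makes the determinant of the base change `1`
  let d : Fin n → ℝ := Pi.mulSingle ⟨0, hn⟩ P.det⁻¹
  let Q : SL n ℝ := ⟨P * diagonal d, by
    rw [det_mul, det_diagonal, Finset.prod_pi_mulSingle', if_pos (Finset.mem_univ _),
      hP.mul_inv_cancel]⟩
  have hAQ : A.1 * Q.1 = Q.1 * diagonal lam := by
    change A.1 * (P * diagonal d) = P * diagonal d * diagonal lam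
    rw [← Matrix.mul_assoc, hAP, Matrix.mul_assoc, Matrix.mul_assoc, (commute_diagonal lam d).eq]
  refine ⟨Q⁻¹, lam, hpos, ?_⟩
  rw [inv_inv, Matrix.SpecialLinearGroup.coe_mul, Matrix.SpecialLinearGroup.coe_mul,
    Matrix.mul_assoc, hAQ, ← Matrix.mul_assoc, ← Matrix.SpecialLinearGroup.coe_mul,
    inv_mul_cancel, Matrix.SpecialLinearGroup.coe_one, Matrix.one_mul]

theorem charpoly_conj {n : ℕ} (P A : SL n ℝ) : (P * A * P⁻¹).1.charpoly = A.1.charpoly := by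
  rw [Matrix.SpecialLinearGroup.coe_mul, charpoly_mul_comm, ← Matrix.SpecialLinearGroup.coe_mul,
    inv_mul_cancel_left]

theorem commute_of_commute_pow {G : Type*} [Group G] [IsMulTorsionFree G] {x y : G} {k l : ℕ}
    (hk : k ≠ 0) (hl : l ≠ 0) (h : Commute (x ^ k) (y ^ l)) : Commute x y := by
  have hpow : ∀ {x y : G} {k : ℕ}, k ≠ 0 → Commute (x ^ k) y → Commute x y := by
    intro x y k hk h
    refine (mul_inv_eq_iff_eq_mul.1 (pow_left_injective hk ?_)).symm
    change (y * x * y⁻¹) ^ k = x ^ k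
    rw [conj_pow, ← h.eq, mul_inv_cancel_right]
  exact hpow hk (hpow hl h.symm).symm

theorem F₂.exists_eigenvaluesIndependent {n : ℕ} (hn : 2 ≤ n) {u z : F₂} (hu : u ≠ 1)
    (hz : z ≠ 1) : ∃ ρ : F₂ →* SL n ℝ, HasDistinctPosEigenvalues (ρ (u ^ 2)).1 ∧
      EigenvaluesIndependent 2 (ρ (u ^ 2)).1 ∧ EigenvaluesIndependent 2 (ρ z).1 := by
  have hu2 : u ^ 2 ≠ 1 := fun h => hu (pow_left_injective (M := F₂) two_ne_zero (by simpa using h))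
  obtain ⟨gu, eu⟩ := isGeneric_eigenvaluesIndependent_and_exists hn 2 hu2
  obtain ⟨gz, ez⟩ := isGeneric_eigenvaluesIndependent_and_exists hn 2 hz
  obtain ⟨ρ, ⟨hρu, hρz⟩, hρ⟩ := (gu.and gz).exists_and_of_isOpenAlongFamilies hn
    (isOpenAlongFamilies_hasDistinctPosEigenvalues (u ^ 2)) (gu.exists_and hn gz eu ez)
    (exists_hasDistinctPosEigenvalues hu n)
  exact ⟨ρ, hρ, hρu, hρz⟩

theorem isZariskiDense_closure_pair_of_eigenvaluesIndependent {n : ℕ} (hn : 2 ≤ n) {A B : SL n ℝ}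
    {lam : Fin n → ℝ} (hA : A.1 = diagonal lam) (hpos : ∀ i, 0 < lam i)
    (hindep : EigenvaluesIndependent 2 A.1)
    (hAB : EigenvaluesIndependent 2 ⁅A, B ^ (2 ^ n).factorial⁆.1) :
    IsZariskiDense n (Subgroup.closure {A, B}) :=
  isZariskiDense_closure_pair hn hA hpos
    (EigenvaluesIndependent.hasDistinctRatios hpos (hA ▸ hindep))
    hAB.not_hasEigenvalueRelation_indicator

theorem F₂.exists_isZariskiDense_closure_pair {n : ℕ} (hn : 2 ≤ n) {u v : F₂}
    (huv : ¬ Commute u v) :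
    ∃ ρ : F₂ →* SL n ℝ, IsZariskiDense n (Subgroup.closure {ρ u, ρ v}) := by
  have hu : u ≠ 1 := fun h => huv (h ▸ Commute.one_left v)
  have hz : ⁅u ^ 2, v ^ (2 ^ n).factorial⁆ ≠ 1 := fun h =>
    huv (commute_of_commute_pow two_ne_zero (Nat.factorial_ne_zero _)
      (commutatorElement_eq_one_iff_commute.1 h))
  obtain ⟨ρ, hdistinct, hindep_u, hindep_z⟩ := F₂.exists_eigenvaluesIndependent hn hu hz
  obtain ⟨P, lam, hpos, hdiag⟩ := hdistinct.exists_conj_eq_diagonal (by omega)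
  let ρ' : F₂ →* SL n ℝ := (MulAut.conj P).toMonoidHom.comp ρ
  have hindep : ∀ w, EigenvaluesIndependent 2 (ρ w).1 → EigenvaluesIndependent 2 (ρ' w).1 :=
    fun w h => h.congr_charpoly (charpoly_conj P (ρ w)).symm
  have hz' := hindep _ hindep_z
  rw [map_commutatorElement, map_pow ρ' v] at hz'
  refine ⟨ρ', (isZariskiDense_closure_pair_of_eigenvaluesIndependent hn hdiag hpos
    (hindep _ hindep_u) hz').mono ((Subgroup.closure_le _).2 ?_)⟩
  rintro x (rfl | rfl)
  · change ρ' (u ^ 2) ∈ _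
    rw [map_pow]
    exact pow_mem (Subgroup.subset_closure (by simp)) 2
  · exact Subgroup.subset_closure (by simp)

theorem exists_rep_with_zariski_dense_pair_general (g n : ℕ) (hg : 2 ≤ g) (hn : 2 ≤ n)
    (a b : SurfaceGroup g) (hab : a * b ≠ b * a) :
    ∃ ρ : SurfaceGroup g →* SL n ℝ, IsZariskiDense n (Subgroup.closure {ρ a, ρ b}) := by
  obtain ⟨φ, hφ⟩ := SurfaceGroup.exists_hom_ne_one hg
    (mt commutatorElement_eq_one_iff_mul_comm.1 hab)
  rw [map_commutatorElement] at hφ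
  obtain ⟨ρ, hρ⟩ := F₂.exists_isZariskiDense_closure_pair hn
    (mt commutatorElement_eq_one_iff_commute.2 hφ)
  exact ⟨ρ.comp φ, hρ⟩

/-- If `a, b ∈ Γ_g` do not commute, there is a representation `ρ : Γ_g → SL_n(ℝ)` such
that `ρ(a)` and `ρ(b)` generate a Zariski-dense subgroup of `SL_n(ℝ)`. -/
theorem exists_rep_with_zariski_dense_pair (g n : ℕ) (hg : 2 ≤ g) (hn : 3 ≤ n)
    (a b : SurfaceGroup g) (hab : a * b ≠ b * a) :
    ∃ ρ : SurfaceGroup g →* SL n ℝ,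
      IsZariskiDense n (Subgroup.closure {ρ a, ρ b}) :=
  exists_rep_with_zariski_dense_pair_general g n hg (by omega) a b hab
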